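/- For any constants α, β, λ > 0 with the product α·β sufficiently large, there exists a constant c > 0 such that the following holds: for every connected d-regular graph G = (V,E) with |V| = n vertices and d ≥ β·log n, every source vertex s ∈ V, every number of agents |A| ≥ α·n, and every integer k ≥ 0, the broadcast times satisfy P[T_visitx(G,s) ≤ c·k] ≥ P[T_push(G,s) ≤ k] − n^{−λ}. -/

import Mathlib

/-!
The proof compares both processes through *stacks*: every vertex `u` owns a sequence of independent
uniform neighbors. In PUSH, the `i`-th entry of the stack of `u` is the vertex sampled by `u` in
the `i`-th round after `u` was informed. In VISIT-EXCHANGE it is the vertex to which the `i`-th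
agent leaving `u` after `u` was informed moves. If PUSH informs `v` within `k` rounds, then `v` is
the endpoint of a chain of stack entries starting at `s` whose indices sum to a cost of at most `k`
(`exists_chain`, `pushProbLe_le_stacks`).

Rather than constructing a joint probability space, the stack entries are integrated against the
walks: `entry` is the conditional probability, given the walks up to time `t`, that a stack entry
has a given value. Products of such values are martingales (`entry_step`), so their expectations are
the product weights of PUSH (`walksE_entry`).

Fix a chain of cost at most `k`. As long as VISIT-EXCHANGE has not traversed it, some vertex of the
chain is informed and waits for departures. If every neighborhood holds at least `α d / 4` agents,
this vertex is visited in the next round with probability at least `1 - exp (-α/4)`, and at most `k`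
such visits are needed. The supermartingale `chMart` turns this into an exponential bound on the
traversal time, even jointly with the event that the stacks agree with the chain (`chain_bound`).
The total weight of all chains of cost at most `k` is at most `2 ^ k` (`sum_chW_le`), so a union
bound over chains loses only a factor that is compensated by taking `c` large (`push_le_vx`).

A Chernoff bound for the stationary independent walks and `d ≥ β log n` make badly occupied
neighborhoods unlikely over polynomially many rounds when `α β` is large (`bad_prob_le`). If
`2 ^ k < n`, PUSH cannot have finished; if `k` is larger than a multiple of `n ^ 2`, the comparison
is applied to a smaller number of rounds, which already suffices for PUSH with high probability
(`push_tail`).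
-/

open Finset
open scoped Classical ENNReal

noncomputable section

namespace Rumor

variable {V : Type*} {A : Type*}

/-- Probability weight of `u` as a uniformly random neighbor of `v` in `G`
(`1/deg v` if `u` is a neighbor of `v`, and `0` otherwise). -/
def nbrW [Fintype V] (G : SimpleGraph V) (v u : V) : ℝ :=
  if G.Adj v u then 1 / (G.degree v : ℝ) else 0

/-- Probability weight of a lazy simple random walk step from `v` to `u`
(stay put with probability `1/2`, otherwise move to a uniform neighbor). -/
def lazyW [Fintype V] (G : SimpleGraph V) (v u : V) : ℝ :=
  if u = v then 1 / 2 else if G.Adj v u then 1 / (2 * (G.degree v : ℝ)) else 0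

/-- Stationary distribution of the simple random walk on `G`:
vertex `v` has probability `deg v / (2 |E|)`. -/
def statW [Fintype V] (G : SimpleGraph V) (v : V) : ℝ :=
  (G.degree v : ℝ) / ∑ u : V, (G.degree u : ℝ)

/-- Informed vertices of the PUSH protocol with source `s` after `t` rounds,
when in round `t+1` each vertex `u` sends the rumor to the vertex `σ t u`. -/
def pushInf (s : V) (σ : ℕ → V → V) : ℕ → Set V
  | 0 => {s}
  | t + 1 => pushInf s σ t ∪ (σ t) '' pushInf s σ t

/-- Informed vertices of the PUSH-PULL protocol with source `s` after `t` rounds,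
when in round `t+1` each vertex `u` contacts the vertex `σ t u`. -/
def ppullInf (s : V) (σ : ℕ → V → V) : ℕ → Set V
  | 0 => {s}
  | t + 1 => ppullInf s σ t ∪ (σ t) '' ppullInf s σ t ∪ {v | σ t v ∈ ppullInf s σ t}

/-- Extend finite-horizon driving noise to all times (by the identity). -/
def extV {k : ℕ} (σ : Fin k → V → V) : ℕ → V → V :=
  fun t => if h : t < k then σ ⟨t, h⟩ else id

/-- `P[T_push(G,s) ≤ k]`: the probability that all vertices are informed within `k`
rounds of the PUSH protocol on `G` with source `s`, where in each round every vertex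
samples an independent uniformly random neighbor. -/
def pushProbLe [Fintype V] (G : SimpleGraph V) (s : V) (k : ℕ) : ℝ :=
  ∑ σ : Fin k → V → V,
    if pushInf s (extV σ) k = Set.univ then ∏ t : Fin k, ∏ v : V, nbrW G v (σ t v) else 0

/-- `P[T_ppull(G,s) ≤ k]` for the PUSH-PULL protocol. -/
def ppullProbLe [Fintype V] (G : SimpleGraph V) (s : V) (k : ℕ) : ℝ :=
  ∑ σ : Fin k → V → V,
    if ppullInf s (extV σ) k = Set.univ then ∏ t : Fin k, ∏ v : V, nbrW G v (σ t v) else 0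

/-- Position after `t` steps of the walk of agent `g`, started at `x0 g`, where at
round `t+1` the agent moves from its current position `v` to `σ t g v`. -/
def walk (x0 : A → V) (σ : ℕ → A → V → V) (g : A) : ℕ → V
  | 0 => x0 g
  | t + 1 => σ t g (walk x0 σ g t)

/-- Extend finite-horizon driving noise for the agents to all times. -/
def extAV {k : ℕ} (σ : Fin k → A → V → V) : ℕ → A → V → V :=
  fun t => if h : t < k then σ ⟨t, h⟩ else fun _ => id

/-- Probability of the event `E` on the trajectories (up to time `k`) of independent
simple random walks on `G`, one for each agent in `A`, each started from an independent
sample of the stationary distribution. -/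
def walksProb [Fintype V] [Fintype A] (G : SimpleGraph V) (k : ℕ)
    (E : (A → ℕ → V) → Prop) : ℝ :=
  ∑ x0 : A → V, ∑ σ : Fin k → A → V → V,
    if E (walk x0 (extAV σ)) then
      (∏ g : A, statW G (x0 g)) * ∏ t : Fin k, ∏ g : A, ∏ v : V, nbrW G v (σ t g v)
    else 0

/-- Probability of the event `E` on the trajectories (up to time `k`) of independent
*lazy* simple random walks on `G`, one for each agent in `A`, each started from an
independent sample of the stationary distribution. -/
def walksLazyProb [Fintype V] [Fintype A] (G : SimpleGraph V) (k : ℕ)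
    (E : (A → ℕ → V) → Prop) : ℝ :=
  ∑ x0 : A → V, ∑ σ : Fin k → A → V → V,
    if E (walk x0 (extAV σ)) then
      (∏ g : A, statW G (x0 g)) * ∏ t : Fin k, ∏ g : A, ∏ v : V, lazyW G v (σ t g v)
    else 0

/-- The pair (informed vertices, informed agents) of VISIT-EXCHANGE with source `s`
after `t` rounds, given agent trajectories `x`. -/
def vxInf (s : V) (x : A → ℕ → V) : ℕ → Set V × Set A
  | 0 => ({s}, {g | x g 0 = s})
  | t + 1 =>
      let p := vxInf s x t
      (p.1 ∪ {v | ∃ g ∈ p.2, x g (t + 1) = v},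
       p.2 ∪ {g | x g (t + 1) ∈ p.1 ∪ {v | ∃ g' ∈ p.2, x g' (t + 1) = v}})

/-- `P[T_visitx(G,s) ≤ k]`: probability that all vertices are informed within `k` rounds
of VISIT-EXCHANGE on `G` with source `s` and `a` agents. -/
def vxProbLe [Fintype V] (G : SimpleGraph V) (s : V) (a k : ℕ) : ℝ :=
  walksProb (A := Fin a) G k fun x => (vxInf s x k).1 = Set.univ

/-- The pair (informed agents, "the source has already informed some agent") of
MEET-EXCHANGE with source `s` after `t` rounds, given agent trajectories `x`. -/
def mxInf (s : V) (x : A → ℕ → V) : ℕ → Set A × Prop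
  | 0 => ({g | x g 0 = s}, ∃ g, x g 0 = s)
  | t + 1 =>
      let p := mxInf s x t
      (p.1 ∪ {g | ∃ g' ∈ p.1, x g' (t + 1) = x g (t + 1)} ∪ {g | ¬p.2 ∧ x g (t + 1) = s},
       p.2 ∨ ∃ g, x g (t + 1) = s)

/-- `P[T_meetx(G,s) ≤ k]`: probability that all agents are informed within `k` rounds of
MEET-EXCHANGE on `G` with source `s` and `a` agents (non-lazy walks). -/
def mxProbLe [Fintype V] (G : SimpleGraph V) (s : V) (a k : ℕ) : ℝ :=
  walksProb (A := Fin a) G k fun x => (mxInf s x k).1 = Set.univ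

/-- `P[T_meetx(G,s) ≤ k]` for MEET-EXCHANGE with lazy walks. -/
def mxLazyProbLe [Fintype V] (G : SimpleGraph V) (s : V) (a k : ℕ) : ℝ :=
  walksLazyProb (A := Fin a) G k fun x => (mxInf s x k).1 = Set.univ

/-- `E[T_push(G,s)] = ∑_{k≥0} P[T_push > k]`. -/
def pushET [Fintype V] (G : SimpleGraph V) (s : V) : ℝ≥0∞ :=
  ∑' k : ℕ, ENNReal.ofReal (1 - pushProbLe G s k)

/-- `E[T_ppull(G,s)] = ∑_{k≥0} P[T_ppull > k]`. -/
def ppullET [Fintype V] (G : SimpleGraph V) (s : V) : ℝ≥0∞ :=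
  ∑' k : ℕ, ENNReal.ofReal (1 - ppullProbLe G s k)

/-- `E[T_visitx(G,s)] = ∑_{k≥0} P[T_visitx > k]` with `a` agents. -/
def vxET [Fintype V] (G : SimpleGraph V) (s : V) (a : ℕ) : ℝ≥0∞ :=
  ∑' k : ℕ, ENNReal.ofReal (1 - vxProbLe G s a k)

/-- `E[T_meetx(G,s)] = ∑_{k≥0} P[T_meetx > k]` with `a` agents. -/
def mxET [Fintype V] (G : SimpleGraph V) (s : V) (a : ℕ) : ℝ≥0∞ :=
  ∑' k : ℕ, ENNReal.ofReal (1 - mxProbLe G s a k)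

end Rumor


namespace Rumor

variable {V : Type*} {A : Type*}

/-! ### Expectations over finite product spaces -/

lemma nbrW_nonneg [Fintype V] (G : SimpleGraph V) (v u : V) : 0 ≤ nbrW G v u := by
  unfold nbrW
  split_ifs <;> positivity

lemma statW_nonneg [Fintype V] (G : SimpleGraph V) (v : V) : 0 ≤ statW G v := by
  unfold statW
  positivity

lemma sum_nbrW_eq [Fintype V] (G : SimpleGraph V) (v : V) :
    ∑ u, nbrW G v u = (G.degree v : ℝ) * (1 / (G.degree v : ℝ)) := by
  unfold nbrW
  rw [← Finset.sum_filter, Finset.sum_const, nsmul_eq_mul]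
  congr 2
  rw [← G.card_neighborFinset_eq_degree]
  congr 1
  ext u
  simp

lemma sum_nbrW_le [Fintype V] (G : SimpleGraph V) (v : V) : ∑ u, nbrW G v u ≤ 1 := by
  rw [sum_nbrW_eq, mul_one_div]
  exact div_self_le_one _

lemma sum_nbrW [Fintype V] {G : SimpleGraph V} {v : V} (h : 0 < G.degree v) :
    ∑ u, nbrW G v u = 1 := by
  rw [sum_nbrW_eq, mul_one_div_cancel]
  exact_mod_cast ne_of_gt h

/-- Weighted sum of `f` over the trajectories of `k` steps: the expectation underlying
`walksProb`. -/
def walksE [Fintype V] [Fintype A] (G : SimpleGraph V) (k : ℕ) (f : (A → ℕ → V) → ℝ) : ℝ :=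
  ∑ x0 : A → V, ∑ σ : Fin k → A → V → V,
    (∏ g : A, statW G (x0 g)) * (∏ t : Fin k, ∏ g : A, ∏ v : V, nbrW G v (σ t g v)) *
      f (walk x0 (extAV σ))

lemma walksProb_eq [Fintype V] [Fintype A] (G : SimpleGraph V) (k : ℕ)
    (E : (A → ℕ → V) → Prop) :
    walksProb G k E = walksE G k (fun x => if E x then 1 else 0) := by
  unfold walksProb walksE
  simp only [mul_ite, mul_one, mul_zero]

lemma walksE_mono [Fintype V] [Fintype A] (G : SimpleGraph V) (k : ℕ)
    {f f' : (A → ℕ → V) → ℝ} (h : ∀ x, f x ≤ f' x) : walksE G k f ≤ walksE G k f' := by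
  unfold walksE
  refine Finset.sum_le_sum fun x0 _ => Finset.sum_le_sum fun σ _ => ?_
  refine mul_le_mul_of_nonneg_left (h _) (mul_nonneg ?_ ?_)
  · exact Finset.prod_nonneg fun g _ => statW_nonneg _ _
  · exact Finset.prod_nonneg fun t _ => Finset.prod_nonneg fun g _ =>
      Finset.prod_nonneg fun v _ => nbrW_nonneg _ _ _

lemma walksE_add [Fintype V] [Fintype A] (G : SimpleGraph V) (k : ℕ)
    (f f' : (A → ℕ → V) → ℝ) :
    walksE G k (fun x => f x + f' x) = walksE G k f + walksE G k f' := by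
  unfold walksE
  simp only [mul_add, Finset.sum_add_distrib]

lemma walksE_mul_left [Fintype V] [Fintype A] (G : SimpleGraph V) (k : ℕ)
    (c : ℝ) (f : (A → ℕ → V) → ℝ) :
    walksE G k (fun x => c * f x) = c * walksE G k f := by
  unfold walksE
  simp only [Finset.mul_sum]
  refine Finset.sum_congr rfl fun x0 _ => Finset.sum_congr rfl fun σ _ => ?_
  ring

lemma walksE_sum [Fintype V] [Fintype A] (G : SimpleGraph V) (k : ℕ) {ι : Type*} (S : Finset ι)
    (f : ι → (A → ℕ → V) → ℝ) :
    walksE G k (fun x => ∑ i ∈ S, f i x) = ∑ i ∈ S, walksE G k (f i) := by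
  unfold walksE
  simp only [Finset.mul_sum]
  rw [Finset.sum_comm (s := S)]
  exact Finset.sum_congr rfl fun x0 _ => Finset.sum_comm

/-- The trajectories that agree with `x` up to time `k` and sit at `y` afterwards. -/
def upd (x : A → ℕ → V) (k : ℕ) (y : A → V) : A → ℕ → V :=
  fun g t => if t ≤ k then x g t else y g

lemma upd_of_le (x : A → ℕ → V) {k t : ℕ} (y : A → V) (h : t ≤ k) (g : A) :
    upd x k y g t = x g t := by simp [upd, h]

lemma upd_succ (x : A → ℕ → V) (k : ℕ) (y : A → V) (g : A) :
    upd x k y g (k + 1) = y g := by simp [upd]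

lemma walk_snoc (x0 : A → V) {k : ℕ} (σ : Fin k → A → V → V) (ρ : A → V → V) :
    walk x0 (extAV (Fin.snoc (α := fun _ => A → V → V) σ ρ)) =
      upd (walk x0 (extAV σ)) k (fun g => ρ g (walk x0 (extAV σ) g k)) := by
  have key : ∀ t, ∀ g, walk x0 (extAV (Fin.snoc (α := fun _ => A → V → V) σ ρ)) g t =
      upd (walk x0 (extAV σ)) k (fun g => ρ g (walk x0 (extAV σ) g k)) g t := by
    intro t
    induction t with
    | zero => intro g; simp [upd, walk]
    | succ t ih =>
      intro g
      rw [walk, ih g]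
      rcases lt_trichotomy t k with h | h | h
      · rw [upd_of_le _ _ h.le, upd_of_le _ _ (by lia), walk]
        simp only [extAV, h, (by lia : t < k + 1), dif_pos]
        rw [show (⟨t, _⟩ : Fin (k + 1)) = Fin.castSucc ⟨t, h⟩ from rfl, Fin.snoc_castSucc]
      · subst h
        rw [upd_of_le _ _ le_rfl, upd_succ]
        simp only [extAV, (by lia : t < t + 1), dif_pos]
        rw [show (⟨t, _⟩ : Fin (t + 1)) = Fin.last t from rfl, Fin.snoc_last]
      · simp [extAV, upd, (by lia : ¬ t < k + 1), (by lia : ¬ t ≤ k), (by lia : ¬ t + 1 ≤ k)]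
  funext g t
  exact key t g

/-- Of the instructions `ρ g v` for all vertices `v`, only the one at the current position
`p g` of agent `g` matters. -/
lemma sum_instr [Fintype V] [Fintype A] {G : SimpleGraph V}
    (hG : ∀ v, ∑ u, nbrW G v u = 1) (p : A → V) (h : (A → V) → ℝ) :
    ∑ ρ : A → V → V, (∏ g, ∏ v, nbrW G v (ρ g v)) * h (fun g => ρ g (p g)) =
      ∑ y : A → V, (∏ g, nbrW G (p g) (y g)) * h y := by
  have h1 : ∀ ρ : A → V → V, (∏ g, ∏ v, nbrW G v (ρ g v)) * h (fun g => ρ g (p g)) =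
      ∑ y : A → V, (∏ g, ∏ v, nbrW G v (ρ g v) *
        (if v = p g then (if ρ g v = y g then 1 else 0) else 1)) * h y := by
    intro ρ
    rw [Finset.sum_eq_single (fun g => ρ g (p g))]
    · congr 1
      refine Finset.prod_congr rfl fun g _ => Finset.prod_congr rfl fun v _ => ?_
      by_cases hv : v = p g
      · subst hv; simp
      · simp [hv]
    · intro y _ hy
      obtain ⟨g, hg⟩ : ∃ g, y g ≠ ρ g (p g) := by
        by_contra hcon
        push Not at hcon
        exact hy (funext hcon)
      rw [Finset.prod_eq_zero (Finset.mem_univ g), zero_mul]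
      apply Finset.prod_eq_zero (Finset.mem_univ (p g))
      simp [Ne.symm hg]
    · simp
  simp only [h1]
  rw [Finset.sum_comm]
  refine Finset.sum_congr rfl fun y _ => ?_
  rw [← Finset.sum_mul]
  congr 1
  rw [← Fintype.prod_sum (κ := fun _ : A => V → V) (fun g (r : V → V) => ∏ v, nbrW G v (r v) *
        (if v = p g then (if r v = y g then (1 : ℝ) else 0) else 1))]
  refine Finset.prod_congr rfl fun g _ => ?_
  rw [← Fintype.prod_sum (κ := fun _ : V => V) (fun v (z : V) => nbrW G v z *
        (if v = p g then (if z = y g then (1 : ℝ) else 0) else 1))]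
  rw [Finset.prod_eq_single (p g)]
  · simp
  · intro v _ hv
    simp [hv, hG v]
  · simp

lemma walksE_succ [Fintype V] [Fintype A] {G : SimpleGraph V}
    (hG : ∀ v, ∑ u, nbrW G v u = 1) (k : ℕ) (f : (A → ℕ → V) → ℝ) :
    walksE G (k + 1) f = walksE G k (fun x =>
      ∑ y : A → V, (∏ g, nbrW G (x g k) (y g)) * f (upd x k y)) := by
  unfold walksE
  refine Finset.sum_congr rfl fun x0 _ => ?_
  rw [← (Fin.snocEquiv (fun _ : Fin (k + 1) => A → V → V)).sum_comp, Fintype.sum_prod_type,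
    Finset.sum_comm]
  refine Finset.sum_congr rfl fun σ _ => ?_
  have e : ∀ ρ : A → V → V, (Fin.snocEquiv (fun _ : Fin (k + 1) => A → V → V)) (ρ, σ) =
      Fin.snoc (α := fun _ => A → V → V) σ ρ := fun ρ => rfl
  simp only [e, walk_snoc, Fin.prod_univ_castSucc, Fin.snoc_castSucc, Fin.snoc_last]
  rw [← sum_instr hG (fun g => walk x0 (extAV σ) g k)
    (fun y => f (upd (walk x0 (extAV σ)) k y)), Finset.mul_sum]
  refine Finset.sum_congr rfl fun ρ _ => ?_
  ring

lemma sum_prod_nbrW [Fintype V] [Fintype A] {G : SimpleGraph V}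
    (hG : ∀ v, ∑ u, nbrW G v u = 1) (p : A → V) :
    ∑ y : A → V, ∏ g, nbrW G (p g) (y g) = 1 := by
  rw [← Fintype.prod_sum (κ := fun _ : A => V) (fun g z => nbrW G (p g) z)]
  simp [hG]

lemma walksE_succ_of_inv [Fintype V] [Fintype A] {G : SimpleGraph V}
    (hG : ∀ v, ∑ u, nbrW G v u = 1) (k : ℕ) (f : (A → ℕ → V) → ℝ)
    (hf : ∀ x y, f (upd x k y) = f x) :
    walksE G (k + 1) f = walksE G k f := by
  rw [walksE_succ hG]
  simp only [hf, ← Finset.sum_mul, sum_prod_nbrW hG, one_mul]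

/-- A nonnegative-weight supermartingale has nonincreasing expectation. -/
lemma walksE_supermart [Fintype V] [Fintype A] {G : SimpleGraph V}
    (hG : ∀ v, ∑ u, nbrW G v u = 1) (M : ℕ → (A → ℕ → V) → ℝ)
    (hM : ∀ t x, ∑ y : A → V, (∏ g, nbrW G (x g t) (y g)) * M (t + 1) (upd x t y) ≤ M t x)
    (T : ℕ) : walksE G T (M T) ≤ walksE G 0 (M 0) := by
  induction T with
  | zero => exact le_rfl
  | succ T ih =>
    rw [walksE_succ hG]
    exact (walksE_mono G T (hM T)).trans ih

lemma sum_statW [Fintype V] {G : SimpleGraph V} {d : ℕ} (hreg : G.IsRegularOfDegree d)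
    (hd : 0 < d) [Nonempty V] : ∑ v, statW G v = 1 := by
  unfold statW
  rw [← Finset.sum_div]
  apply div_self
  simp only [hreg.degree_eq, Finset.sum_const, Finset.card_univ, nsmul_eq_mul]
  have : 0 < Fintype.card V := Fintype.card_pos
  positivity

lemma walksE_zero_const [Fintype V] [Fintype A] {G : SimpleGraph V}
    (hs : ∑ v, statW G v = 1) (c : ℝ) : walksE (A := A) G 0 (fun _ => c) = c := by
  unfold walksE
  simp only [Finset.univ_unique, Finset.univ_eq_empty, Finset.prod_empty, mul_one,
    Finset.sum_singleton, ← Finset.sum_mul]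
  rw [← Fintype.prod_sum (κ := fun _ : A => V) (fun _ z => statW G z)]
  simp [hs]

lemma walksE_const [Fintype V] [Fintype A] {G : SimpleGraph V}
    (hG : ∀ v, ∑ u, nbrW G v u = 1) (hs : ∑ v, statW G v = 1) (k : ℕ) (c : ℝ) :
    walksE (A := A) G k (fun _ => c) = c := by
  induction k with
  | zero => exact walksE_zero_const hs c
  | succ k ih => rw [walksE_succ_of_inv hG _ _ (fun _ _ => rfl), ih]

/-- The walks are stationary and independent: at each fixed time, the positions are
independent samples of `statW`. -/
lemma walksE_prod [Fintype V] [Fintype A] {G : SimpleGraph V}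
    (hG : ∀ v, ∑ u, nbrW G v u = 1)
    (hst : ∀ u, ∑ v, statW G v * nbrW G v u = statW G u) (k : ℕ) :
    ∀ f : V → ℝ, walksE (A := A) G k (fun x => ∏ g, f (x g k)) =
      (∑ v, statW G v * f v) ^ Fintype.card A := by
  induction k with
  | zero =>
    intro f
    unfold walksE
    simp only [Finset.univ_unique, Finset.univ_eq_empty, Finset.prod_empty, mul_one,
      Finset.sum_singleton, walk, ← Finset.prod_mul_distrib]
    rw [← Fintype.prod_sum (κ := fun _ : A => V) (fun _ z => statW G z * f z)]
    simp
  | succ k ih =>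
    intro f
    rw [walksE_succ hG]
    simp only [upd_succ, ← Finset.prod_mul_distrib]
    have e : ∀ x : A → ℕ → V, ∑ y : A → V, ∏ g, nbrW G (x g k) (y g) * f (y g) =
        ∏ g, (fun v => ∑ u, nbrW G v u * f u) (x g k) := by
      intro x
      rw [← Fintype.prod_sum (κ := fun _ : A => V) (fun g z => nbrW G (x g k) z * f z)]
    simp only [e]
    rw [ih (fun v => ∑ u, nbrW G v u * f u)]
    congr 1
    simp only [Finset.mul_sum]
    rw [Finset.sum_comm]
    refine Finset.sum_congr rfl fun u _ => ?_
    simp only [← mul_assoc, ← Finset.sum_mul, hst]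

end Rumor

namespace Rumor

variable {V : Type*} {A : Type*}

/-! ### Departures of VISIT-EXCHANGE and the stacks they consume -/

lemma vxInf_congr (s : V) {x x' : A → ℕ → V} {t : ℕ} (h : ∀ g, ∀ r ≤ t, x g r = x' g r) :
    vxInf s x t = vxInf s x' t := by
  induction t with
  | zero => simp [vxInf, h]
  | succ t ih =>
    have e := ih (fun g r hr => h g r (by lia))
    have h' : ∀ g, x g (t + 1) = x' g (t + 1) := fun g => h g _ le_rfl
    simp only [vxInf, e, h']

lemma vxInf_mono_succ (s : V) (x : A → ℕ → V) (t : ℕ) :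
    (vxInf s x t).1 ⊆ (vxInf s x (t + 1)).1 := by
  intro v hv
  exact Or.inl hv

lemma vxInf_mono (s : V) (x : A → ℕ → V) : Monotone (fun t => (vxInf s x t).1) :=
  monotone_nat_of_le_succ (vxInf_mono_succ s x)

lemma source_mem_vxInf (s : V) (x : A → ℕ → V) (t : ℕ) : s ∈ (vxInf s x t).1 :=
  vxInf_mono s x (Nat.zero_le t) rfl

lemma agent_informed (s : V) (x : A → ℕ → V) (t : ℕ) (g : A) (h : x g t ∈ (vxInf s x t).1) :
    g ∈ (vxInf s x t).2 := by
  cases t with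
  | zero => exact h
  | succ t => exact Or.inr h

lemma vxInf_step (s : V) (x : A → ℕ → V) (t : ℕ) (g : A) (h : x g t ∈ (vxInf s x t).1) :
    x g (t + 1) ∈ (vxInf s x (t + 1)).1 :=
  Or.inr ⟨g, agent_informed s x t g h, rfl⟩

lemma vxInf_upd (s : V) (x : A → ℕ → V) (y : A → V) {k t : ℕ} (h : t ≤ k) :
    vxInf s (upd x k y) t = vxInf s x t :=
  vxInf_congr s fun g _ hr => upd_of_le x y (hr.trans h) g

variable [Fintype A]

/-- The agents located at `u` in round `t`. -/
def occ (x : A → ℕ → V) (u : V) (t : ℕ) : Finset A := univ.filter (fun g => x g t = u)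

/-- The number of departures from `u` up to time `t` (that is, of agents present at `u` in
some round before `t`) that take place while `u` is informed. -/
def dep (s : V) (x : A → ℕ → V) (u : V) : ℕ → ℕ
  | 0 => 0
  | t + 1 => dep s x u t + if u ∈ (vxInf s x t).1 then (occ x u t).card else 0

/-- The `i`-th departure from the informed vertex `u` (counting from `0`) takes place in the
step from time `t` to time `t + 1`. -/
def Newly (s : V) (x : A → ℕ → V) (u : V) (i t : ℕ) : Prop :=
  dep s x u t ≤ i ∧ i < dep s x u (t + 1)

/-- The conditional probability, given the trajectories up to time `t`, that the `i`-th
departure from the informed vertex `u` leads to `z`: once this departure has happened it is an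
indicator, and before that it is `nbrW G u z`. Agents that leave `u` in the same round are
ordered by an arbitrary enumeration. -/
def entry [Fintype V] (G : SimpleGraph V) (s : V) (x : A → ℕ → V) (u : V) (i : ℕ) (z : V) :
    ℕ → ℝ
  | 0 => nbrW G u z
  | t + 1 =>
    if Newly s x u i t then
      (if ∃ g, (occ x u t).toList[i - dep s x u t]? = some g ∧ x g (t + 1) = z then 1 else 0)
    else entry G s x u i z t

lemma occ_congr {x x' : A → ℕ → V} {t : ℕ} (u : V) (h : ∀ g, x g t = x' g t) :
    occ x u t = occ x' u t := by
  simp [occ, h]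

lemma dep_congr (s : V) {x x' : A → ℕ → V} (u : V) {t : ℕ} (h : ∀ g, ∀ r < t, x g r = x' g r) :
    dep s x u t = dep s x' u t := by
  induction t with
  | zero => rfl
  | succ t ih =>
    rw [dep, dep, ih (fun g r hr => h g r (by lia)),
      vxInf_congr s (fun g r hr => h g r (by lia)), occ_congr u (fun g => h g t (by lia))]

lemma entry_congr [Fintype V] (G : SimpleGraph V) (s : V) {x x' : A → ℕ → V} (u : V) (i : ℕ)
    (z : V) {t : ℕ} (h : ∀ g, ∀ r ≤ t, x g r = x' g r) :
    entry G s x u i z t = entry G s x' u i z t := by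
  induction t with
  | zero => rfl
  | succ t ih =>
    have h' : ∀ g, x g (t + 1) = x' g (t + 1) := fun g => h g _ le_rfl
    have h1 := dep_congr (t := t) s u (fun g r hr => h g r (by lia))
    have h2 := dep_congr (t := t + 1) s u (fun g r hr => h g r (by lia))
    have h3 : Newly s x u i t = Newly s x' u i t := by rw [Newly, Newly, h1, h2]
    simp only [entry, h1, h3, h', ih (fun g r hr => h g r (by lia)),
      occ_congr u (fun g => h g t (by lia))]

lemma dep_upd (s : V) (x : A → ℕ → V) (y : A → V) (u : V) {k t : ℕ} (h : t ≤ k + 1) :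
    dep s (upd x k y) u t = dep s x u t :=
  dep_congr s u fun g _ hr => upd_of_le x y (by lia) g

lemma entry_upd [Fintype V] (G : SimpleGraph V) (s : V) (x : A → ℕ → V) (y : A → V) (u : V)
    (i : ℕ) (z : V) {k t : ℕ} (h : t ≤ k) :
    entry G s (upd x k y) u i z t = entry G s x u i z t :=
  entry_congr G s u i z fun g _ hr => upd_of_le x y (hr.trans h) g

lemma newly_upd (s : V) (x : A → ℕ → V) (y : A → V) (u : V) (i : ℕ) {k t : ℕ} (h : t ≤ k) :
    Newly s (upd x k y) u i t ↔ Newly s x u i t := by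
  rw [Newly, Newly, dep_upd s x y u (by lia), dep_upd s x y u (by lia)]

lemma dep_mono (s : V) (x : A → ℕ → V) (u : V) : Monotone (dep s x u) :=
  monotone_nat_of_le_succ fun _ => Nat.le_add_right _ _

lemma mem_occ (x : A → ℕ → V) (u : V) (t : ℕ) (g : A) : g ∈ occ x u t ↔ x g t = u := by
  simp [occ]

lemma Newly.informed {s : V} {x : A → ℕ → V} {u : V} {i t : ℕ} (h : Newly s x u i t) :
    u ∈ (vxInf s x t).1 := by
  by_contra hu
  have := h.1
  have := h.2
  simp only [dep, hu, if_false] at this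
  lia

lemma Newly.lt_card {s : V} {x : A → ℕ → V} {u : V} {i t : ℕ} (h : Newly s x u i t) :
    i - dep s x u t < (occ x u t).card := by
  have h1 := h.1
  have h2 := h.2
  simp only [dep, h.informed, if_true] at h2
  lia

lemma Newly.exists_agent {s : V} {x : A → ℕ → V} {u : V} {i t : ℕ} (h : Newly s x u i t) :
    ∃ g, (occ x u t).toList[i - dep s x u t]? = some g :=
  ⟨_, List.getElem?_eq_getElem (by rw [Finset.length_toList]; exact h.lt_card)⟩

lemma pos_of_toList {x : A → ℕ → V} {u : V} {t j : ℕ} {g : A}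
    (h : (occ x u t).toList[j]? = some g) : x g t = u := by
  rw [← mem_occ, ← Finset.mem_toList]
  exact List.mem_of_getElem? h

lemma entry_nonneg [Fintype V] (G : SimpleGraph V) (s : V) (x : A → ℕ → V) (u : V) (i : ℕ)
    (z : V) (t : ℕ) : 0 ≤ entry G s x u i z t := by
  induction t with
  | zero => exact nbrW_nonneg _ _ _
  | succ t ih =>
    rw [entry]
    split_ifs
    · exact zero_le_one
    · exact le_rfl
    · exact ih

lemma sum_entry [Fintype V] {G : SimpleGraph V} (hG : ∀ v, ∑ u, nbrW G v u = 1) (s : V)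
    (x : A → ℕ → V) (u : V) (i : ℕ) (t : ℕ) : ∑ z, entry G s x u i z t = 1 := by
  induction t with
  | zero => exact hG u
  | succ t ih =>
    simp only [entry]
    by_cases h : Newly s x u i t
    · obtain ⟨g, hg⟩ := h.exists_agent
      simp [h, hg]
    · simp only [h, if_false, ih]

lemma entry_of_le [Fintype V] (G : SimpleGraph V) (s : V) (x : A → ℕ → V) (u : V) (i : ℕ)
    (z : V) (t : ℕ) (h : dep s x u t ≤ i) : entry G s x u i z t = nbrW G u z := by
  induction t with
  | zero => rfl
  | succ t ih =>
    rw [entry, if_neg (fun hn => absurd hn.2 (by lia)),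
      ih ((dep_mono s x u (Nat.le_succ t)).trans h)]

lemma entry_stable [Fintype V] (G : SimpleGraph V) (s : V) (x : A → ℕ → V) (u : V) (i : ℕ)
    (z : V) {t T : ℕ} (h : i < dep s x u t) (hT : t ≤ T) :
    entry G s x u i z T = entry G s x u i z t := by
  induction T, hT using Nat.le_induction with
  | base => rfl
  | succ T hT ih =>
    have := dep_mono s x u hT
    rw [entry, if_neg (fun hn => absurd hn.1 (by lia)), ih]

lemma informed_of_entry_ne_zero [Fintype V] (G : SimpleGraph V) (s : V) (x : A → ℕ → V) (u : V)
    (i : ℕ) (z : V) (t : ℕ) (h : i < dep s x u t) (h0 : entry G s x u i z t ≠ 0) :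
    z ∈ (vxInf s x t).1 := by
  induction t with
  | zero => simp [dep] at h
  | succ t ih =>
    rw [entry] at h0
    by_cases hn : Newly s x u i t
    · rw [if_pos hn] at h0
      obtain ⟨g, hg, hz⟩ : ∃ g, (occ x u t).toList[i - dep s x u t]? = some g ∧
          x g (t + 1) = z := by
        by_contra hcon
        rw [if_neg hcon] at h0
        exact h0 rfl
      rw [← hz]
      apply vxInf_step
      rw [pos_of_toList hg]
      exact hn.informed
    · rw [if_neg hn] at h0
      apply vxInf_mono_succ
      refine ih ?_ h0
      by_contra hcon
      exact hn ⟨by lia, h⟩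

/-- Distinct agents have independent next moves, so the probability that certain agents make
prescribed moves is the product of the individual probabilities. -/
lemma sum_forced [Fintype V] {G : SimpleGraph V} (hG : ∀ v, ∑ u, nbrW G v u = 1) {ι : Type*}
    (N : Finset ι) (ag : ι → A) (hinj : Set.InjOn ag N) (p : A → V) (Y : ι → V) :
    ∑ y : A → V, (∏ g, nbrW G (p g) (y g)) * ∏ e ∈ N, (if y (ag e) = Y e then (1 : ℝ) else 0) =
      ∏ e ∈ N, nbrW G (p (ag e)) (Y e) := by
  have e1 : ∀ y : A → V, (∏ g, nbrW G (p g) (y g)) *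
      ∏ e ∈ N, (if y (ag e) = Y e then (1 : ℝ) else 0) =
      ∏ g, nbrW G (p g) (y g) * ∏ e ∈ N with ag e = g, (if y g = Y e then (1 : ℝ) else 0) := by
    intro y
    rw [Finset.prod_mul_distrib]
    congr 1
    rw [← Finset.prod_fiberwise N ag]
    refine Finset.prod_congr rfl fun g _ => Finset.prod_congr rfl fun e he => ?_
    rw [(Finset.mem_filter.mp he).2]
  simp only [e1]
  rw [← Fintype.prod_sum (κ := fun _ : A => V) (fun g z => nbrW G (p g) z *
    ∏ e ∈ N with ag e = g, (if z = Y e then (1 : ℝ) else 0)),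
    ← Finset.prod_fiberwise N ag (fun e => nbrW G (p (ag e)) (Y e))]
  refine Finset.prod_congr rfl fun g _ => ?_
  by_cases hg : ∃ e ∈ N, ag e = g
  · obtain ⟨e, he, rfl⟩ := hg
    have : N.filter (fun e' => ag e' = ag e) = {e} := by
      ext e'
      simp only [Finset.mem_filter, Finset.mem_singleton]
      constructor
      · rintro ⟨h1, h2⟩
        exact hinj h1 he h2
      · rintro rfl
        exact ⟨he, rfl⟩
    simp [this]
  · have : N.filter (fun e' => ag e' = g) = ∅ := by
      rw [Finset.filter_eq_empty_iff]
      intro e he h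
      exact hg ⟨e, he, h⟩
    simp [this, hG]

/-- For any set `J` of stack positions with prescribed values `Y`, the product of the
conditional probabilities `entry` is a martingale. -/
lemma entry_step [Fintype V] {G : SimpleGraph V} (hG : ∀ v, ∑ u, nbrW G v u = 1) (s : V)
    (J : Finset (V × ℕ)) (Y : V × ℕ → V) (x : A → ℕ → V) (t : ℕ) :
    ∑ y : A → V, (∏ g, nbrW G (x g t) (y g)) *
        ∏ e ∈ J, entry G s (upd x t y) e.1 e.2 (Y e) (t + 1) =
      ∏ e ∈ J, entry G s x e.1 e.2 (Y e) t := by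
  set N := J.filter (fun e => Newly s x e.1 e.2 t) with hN
  set R := J.filter (fun e => ¬ Newly s x e.1 e.2 t) with hR
  have hocc : ∀ (y : A → V) (u : V), occ (upd x t y) u t = occ x u t := fun y u =>
    occ_congr u fun g => upd_of_le x y le_rfl g
  have hrest : ∀ y : A → V, ∏ e ∈ R, entry G s (upd x t y) e.1 e.2 (Y e) (t + 1) =
      ∏ e ∈ R, entry G s x e.1 e.2 (Y e) t := by
    intro y
    refine Finset.prod_congr rfl fun e he => ?_
    rw [entry, if_neg (by rw [newly_upd s x y _ _ le_rfl]; exact (Finset.mem_filter.mp he).2),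
      entry_upd G s x y _ _ _ le_rfl]
  have hex : ∀ e : V × ℕ, e ∈ N →
      ∃ g, (occ x e.1 t).toList[e.2 - dep s x e.1 t]? = some g := fun e he =>
    (Finset.mem_filter.mp he).2.exists_agent
  by_cases hN0 : N = ∅
  · have hJ : J = R := by
      rw [hR, Finset.filter_not, ← hN, hN0, Finset.sdiff_empty]
    rw [hJ]
    simp only [hrest, ← Finset.sum_mul, sum_prod_nbrW hG, one_mul]
  obtain ⟨e0, he0⟩ := Finset.nonempty_iff_ne_empty.mpr hN0
  have : Nonempty A := ⟨(hex e0 he0).choose⟩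
  choose! ag hag using hex
  have hpos : ∀ e ∈ N, x (ag e) t = e.1 := fun e he => pos_of_toList (hag e he)
  have hinj : Set.InjOn ag N := by
    intro e he e' he' h
    have h1 : e.1 = e'.1 := by rw [← hpos e he, ← hpos e' he', h]
    have h2 := hag e he
    have h3 := hag e' he'
    rw [← h, ← h1] at h3
    have hn := (Finset.mem_filter.mp he).2
    have hn' := (Finset.mem_filter.mp he').2
    have := (List.getElem?_inj (by rw [Finset.length_toList]; exact hn.lt_card)
      (Finset.nodup_toList _)).mp (h2.trans h3.symm)
    have a1 := hn.1
    have a2 := hn'.1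
    rw [← h1] at a2
    exact Prod.ext h1 (by lia)
  have hnew : ∀ y : A → V, ∏ e ∈ N, entry G s (upd x t y) e.1 e.2 (Y e) (t + 1) =
      ∏ e ∈ N, (if y (ag e) = Y e then (1 : ℝ) else 0) := by
    intro y
    refine Finset.prod_congr rfl fun e he => ?_
    rw [entry, if_pos (by rw [newly_upd s x y _ _ le_rfl]; exact (Finset.mem_filter.mp he).2),
      hocc, dep_upd s x y _ (by lia), hag e he]
    simp [upd_succ]
  have hsplit : ∀ f : V × ℕ → ℝ, ∏ e ∈ J, f e = (∏ e ∈ N, f e) * ∏ e ∈ R, f e := fun f =>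
    (Finset.prod_filter_mul_prod_filter_not J _ f).symm
  simp only [hsplit, hrest, hnew, ← mul_assoc, ← Finset.sum_mul]
  congr 1
  rw [sum_forced hG N ag hinj]
  refine Finset.prod_congr rfl fun e he => ?_
  rw [hpos e he, entry_of_le _ _ _ _ _ _ _ (Finset.mem_filter.mp he).2.1]

lemma walksE_entry [Fintype V] {G : SimpleGraph V} (hG : ∀ v, ∑ u, nbrW G v u = 1)
    (hs : ∑ v, statW G v = 1) (s : V) (J : Finset (V × ℕ)) (Y : V × ℕ → V) (T : ℕ) :
    walksE (A := A) G T (fun x => ∏ e ∈ J, entry G s x e.1 e.2 (Y e) T) =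
      ∏ e ∈ J, nbrW G e.1 (Y e) := by
  induction T with
  | zero => exact walksE_zero_const (A := A) hs (∏ e ∈ J, nbrW G e.1 (Y e))
  | succ T ih =>
    rw [walksE_succ hG, ← ih]
    simp only [entry_step (A := A) hG s J Y]

end Rumor

namespace Rumor

variable {V : Type*} {A : Type*}

/-! ### Chains of stack entries and the speed of VISIT-EXCHANGE along a chain -/

/-- Endpoint of a chain. A chain `e :: ℓ`, listed backwards, records the steps of a path from
the source: `e = ((u, i), v)` says that the `i`-th entry of the stack of `u` is `v`. -/
def chEnd (s : V) : List ((V × ℕ) × V) → V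
  | [] => s
  | e :: _ => e.2

/-- Number of PUSH rounds needed to traverse a chain. -/
def chCost : List ((V × ℕ) × V) → ℕ
  | [] => 0
  | e :: ℓ => chCost ℓ + (e.1.2 + 1)

/-- Every step of the chain starts where the previous one ends, the first one at `s`. -/
def chValid (s : V) : List ((V × ℕ) × V) → Prop
  | [] => True
  | e :: ℓ => e.1.1 = chEnd s ℓ ∧ chValid s ℓ

/-- The stack positions used by a chain. -/
def chSet (ℓ : List ((V × ℕ) × V)) : Finset (V × ℕ) := (ℓ.map Prod.fst).toFinset

lemma mem_chSet {ℓ : List ((V × ℕ) × V)} {p : V × ℕ} : p ∈ chSet ℓ ↔ ∃ e ∈ ℓ, e.1 = p := by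
  simp [chSet]

lemma sum_chSet_le (ℓ : List ((V × ℕ) × V)) : ∑ p ∈ chSet ℓ, (p.2 + 1) ≤ chCost ℓ := by
  induction ℓ with
  | nil => simp [chSet, chCost]
  | cons e ℓ ih =>
    have : chSet (e :: ℓ) = insert e.1 (chSet ℓ) := by simp [chSet]
    rw [this, chCost]
    by_cases h : e.1 ∈ chSet ℓ
    · rw [Finset.insert_eq_of_mem h]
      lia
    · rw [Finset.sum_insert h]
      lia

variable [Fintype A]

/-- The vertex at which the traversal of the chain by VISIT-EXCHANGE is waiting at time `t`:
the starting point of the first step that has not been performed. -/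
def chCur (s : V) (x : A → ℕ → V) (t : ℕ) : List ((V × ℕ) × V) → V
  | [] => s
  | e :: ℓ => if ∀ e' ∈ ℓ, e'.1.2 < dep s x e'.1.1 t then e.1.1 else chCur s x t ℓ

lemma chCur_upd (s : V) (x : A → ℕ → V) (y : A → V) {k t : ℕ} (h : t ≤ k + 1)
    (ℓ : List ((V × ℕ) × V)) : chCur s (upd x k y) t ℓ = chCur s x t ℓ := by
  induction ℓ with
  | nil => rfl
  | cons e ℓ ih => simp only [chCur, ih, dep_upd s x y _ h]

section determ

variable [Fintype V] (G : SimpleGraph V) (s : V) (x : A → ℕ → V) {T t : ℕ}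

lemma chEnd_informed (ht : t ≤ T) {ℓ : List ((V × ℕ) × V)}
    (hm : ∀ e ∈ ℓ, entry G s x e.1.1 e.1.2 e.2 T ≠ 0)
    (hr : ∀ e ∈ ℓ, e.1.2 < dep s x e.1.1 t) : chEnd s ℓ ∈ (vxInf s x t).1 := by
  cases ℓ with
  | nil => exact source_mem_vxInf s x t
  | cons e ℓ =>
    have h1 := hr e (by simp)
    have h2 := hm e (by simp)
    rw [entry_stable G s x _ _ _ h1 ht] at h2
    exact informed_of_entry_ne_zero G s x _ _ _ t h1 h2

lemma chCur_spec (ht : t ≤ T) (ℓ : List ((V × ℕ) × V)) (hv : chValid s ℓ)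
    (hm : ∀ e ∈ ℓ, entry G s x e.1.1 e.1.2 e.2 T ≠ 0)
    (hr : ¬ ∀ e ∈ ℓ, e.1.2 < dep s x e.1.1 t) :
    chCur s x t ℓ ∈ (vxInf s x t).1 ∧
      ∃ e ∈ ℓ, e.1.1 = chCur s x t ℓ ∧ dep s x e.1.1 t ≤ e.1.2 := by
  induction ℓ with
  | nil => simp at hr
  | cons e ℓ ih =>
    have hm' : ∀ e ∈ ℓ, entry G s x e.1.1 e.1.2 e.2 T ≠ 0 := fun e' he' => hm e' (by simp [he'])
    rw [chCur]
    split_ifs with h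
    · refine ⟨?_, e, by simp, rfl, ?_⟩
      · rw [hv.1]
        exact chEnd_informed G s x ht hm' h
      · by_contra hcon
        apply hr
        intro e' he'
        rcases List.mem_cons.mp he' with rfl | he'
        · lia
        · exact h e' he'
    · obtain ⟨h1, e', he', h2⟩ := ih hv.2 hm' h
      exact ⟨h1, e', by simp [he'], h2⟩

end determ

/-- Progress along a set of stack positions, counted in departures. -/
def progress (s : V) (x : A → ℕ → V) (J : Finset (V × ℕ)) (t : ℕ) : ℕ :=
  ∑ e ∈ J, min (dep s x e.1 t) (e.2 + 1)

lemma progress_le (s : V) (x : A → ℕ → V) (J : Finset (V × ℕ)) (t : ℕ) :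
    progress s x J t ≤ ∑ e ∈ J, (e.2 + 1) :=
  Finset.sum_le_sum fun _ _ => min_le_right _ _

lemma progress_mono (s : V) (x : A → ℕ → V) (J : Finset (V × ℕ)) :
    Monotone (progress s x J) := fun _ _ h =>
  Finset.sum_le_sum fun e _ => min_le_min_right _ (dep_mono s x e.1 h)

lemma progress_lt (s : V) (x : A → ℕ → V) (J : Finset (V × ℕ)) (t : ℕ) {e : V × ℕ} (he : e ∈ J)
    (h1 : dep s x e.1 t ≤ e.2) (h2 : dep s x e.1 t < dep s x e.1 (t + 1)) :
    progress s x J t + 1 ≤ progress s x J (t + 1) := by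
  refine Finset.sum_lt_sum (fun e _ => min_le_min_right _ (dep_mono s x e.1 (Nat.le_succ t)))
    ⟨e, he, ?_⟩
  lia

lemma card_le_of_progress (Q : ℕ → ℕ) (hQ : Monotone Q) (P : ℕ → Prop) [DecidablePred P] (T : ℕ)
    (h : ∀ t < T, P t → Q t + 1 ≤ Q (t + 1)) : ((range T).filter P).card ≤ Q T := by
  induction T with
  | zero => simp
  | succ T ih =>
    have ih' := ih fun t ht => h t (by lia)
    have hm := hQ (Nat.le_succ T)
    rw [Finset.range_add_one, Finset.filter_insert]
    split_ifs with hP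
    · have := h T (by lia) hP
      rw [Finset.card_insert_of_notMem (by simp)]
      lia
    · exact ih'.trans hm

/-- All neighborhoods hold at least a quarter of the number of agents expected
there for agent density `α`. -/
def GoodAt (G : SimpleGraph V) (α : ℝ) (d : ℕ) (x : A → ℕ → V) (t : ℕ) : Prop :=
  ∀ u, α * d / 4 ≤ ((univ.filter (fun g => G.Adj u (x g t))).card : ℝ)

/-- The factor contributed by the step from `t` to `t + 1` to the supermartingale that
measures how long the traversal of a chain takes. It is neutral if a departure prescribed by
the chain takes place in this step, as the agents then do not all move freely. -/
def phi (G : SimpleGraph V) (α : ℝ) (d : ℕ) (s : V) (x : A → ℕ → V) (ℓ : List ((V × ℕ) × V))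
    (t : ℕ) : ℝ :=
  if (∃ e ∈ chSet ℓ, Newly s x e.1 e.2 t) ∨ ¬ GoodAt G α d x t then 1
  else if ∃ g, x g (t + 1) = chCur s x (t + 1) ℓ then 1 / 2 else Real.exp (α / 8)

lemma phi_upd (G : SimpleGraph V) (α : ℝ) (d : ℕ) (s : V) (x : A → ℕ → V)
    (ℓ : List ((V × ℕ) × V)) {k t : ℕ} (y : A → V) (h : t < k) :
    phi G α d s (upd x k y) ℓ t = phi G α d s x ℓ t := by
  have h1 : ∀ g, upd x k y g t = x g t := upd_of_le x y h.le
  have h2 : ∀ g, upd x k y g (t + 1) = x g (t + 1) := upd_of_le x y h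
  have h3 : GoodAt G α d (upd x k y) t = GoodAt G α d x t := by simp only [GoodAt, h1]
  simp only [phi, newly_upd s x y _ _ h.le, h2, h3, chCur_upd s x y (show t + 1 ≤ k + 1 by lia)]

lemma phi_nonneg (G : SimpleGraph V) (α : ℝ) (d : ℕ) (s : V) (x : A → ℕ → V)
    (ℓ : List ((V × ℕ) × V)) (t : ℕ) : 0 ≤ phi G α d s x ℓ t := by
  unfold phi
  split_ifs <;> positivity

/-- From a good configuration, a given vertex `w` is left unvisited in the next round with
probability at most `exp (-α/4)`. -/
lemma sum_unvisited [Fintype V] {G : SimpleGraph V} {d : ℕ} (hreg : G.IsRegularOfDegree d)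
    (hd : 0 < d) (α : ℝ) (x : A → ℕ → V) (t : ℕ) (hgood : GoodAt G α d x t) (w : V) :
    ∑ y : A → V, (∏ g, nbrW G (x g t) (y g)) * (if ∃ g, y g = w then (0 : ℝ) else 1) ≤
      Real.exp (-(α / 4)) := by
  have hG : ∀ v, ∑ u, nbrW G v u = 1 := fun v => sum_nbrW (by rw [hreg.degree_eq]; exact hd)
  have e1 : ∀ y : A → V, (∏ g, nbrW G (x g t) (y g)) * (if ∃ g, y g = w then (0 : ℝ) else 1) =
      ∏ g, nbrW G (x g t) (y g) * (if y g = w then 0 else 1) := by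
    intro y
    rw [Finset.prod_mul_distrib]
    congr 1
    split_ifs with h
    · obtain ⟨g, hg⟩ := h
      rw [Finset.prod_eq_zero (Finset.mem_univ g)]
      simp [hg]
    · push Not at h
      simp [h]
  simp only [e1]
  rw [← Fintype.prod_sum (κ := fun _ : A => V) (fun g z => nbrW G (x g t) z *
    (if z = w then (0 : ℝ) else 1))]
  have e2 : ∀ g : A, ∑ z, nbrW G (x g t) z * (if z = w then (0 : ℝ) else 1) =
      1 - nbrW G (x g t) w := by
    intro g
    have : ∀ z, nbrW G (x g t) z * (if z = w then (0 : ℝ) else 1) =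
        nbrW G (x g t) z - (if z = w then nbrW G (x g t) z else 0) := by
      intro z
      split_ifs <;> simp
    simp [this, Finset.sum_sub_distrib, hG]
  simp only [e2]
  have h0 : ∀ g : A, 0 ≤ 1 - nbrW G (x g t) w := by
    intro g
    rw [sub_nonneg, ← hG (x g t)]
    exact Finset.single_le_sum (f := fun u => nbrW G (x g t) u)
      (fun u _ => nbrW_nonneg G _ u) (Finset.mem_univ w)
  calc ∏ g : A, (1 - nbrW G (x g t) w) ≤ ∏ g : A, Real.exp (-nbrW G (x g t) w) :=
        Finset.prod_le_prod (fun g _ => h0 g) fun g _ => Real.one_sub_le_exp_neg _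
    _ = Real.exp (-∑ g : A, nbrW G (x g t) w) := by
        rw [← Real.exp_sum, Finset.sum_neg_distrib]
    _ ≤ Real.exp (-(α / 4)) := by
        rw [Real.exp_le_exp, neg_le_neg_iff]
        have e3 : ∑ g : A, nbrW G (x g t) w =
            ((univ.filter (fun g => G.Adj w (x g t))).card : ℝ) * (1 / d) := by
          simp only [nbrW, hreg.degree_eq]
          rw [← Finset.sum_filter, Finset.sum_const, nsmul_eq_mul]
          simp only [G.adj_comm]
        rw [e3]
        have hdpos : (0 : ℝ) < d := by exact_mod_cast hd
        rw [mul_one_div, le_div_iff₀ hdpos]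
        have := hgood w
        linarith

lemma sum_phi_le [Fintype V] {G : SimpleGraph V} {d : ℕ} (hreg : G.IsRegularOfDegree d)
    (hd : 0 < d) {α : ℝ} (hα : 0 < α) (s : V) (ℓ : List ((V × ℕ) × V)) (x : A → ℕ → V) (t : ℕ)
    (h : ¬ ((∃ e ∈ chSet ℓ, Newly s x e.1 e.2 t) ∨ ¬ GoodAt G α d x t)) :
    ∑ y : A → V, (∏ g, nbrW G (x g t) (y g)) * phi G α d s (upd x t y) ℓ t ≤ 1 := by
  have hG : ∀ v, ∑ u, nbrW G v u = 1 := fun v => sum_nbrW (by rw [hreg.degree_eq]; exact hd)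
  have hgood : GoodAt G α d x t := by
    by_contra hcon
    exact h (Or.inr hcon)
  have e1 : ∀ y : A → V, phi G α d s (upd x t y) ℓ t =
      1 / 2 + (Real.exp (α / 8) - 1 / 2) *
        (if ∃ g, y g = chCur s x (t + 1) ℓ then (0 : ℝ) else 1) := by
    intro y
    have h1 : ∀ g, upd x t y g t = x g t := upd_of_le x y le_rfl
    have h3 : GoodAt G α d (upd x t y) t = GoodAt G α d x t := by simp only [GoodAt, h1]
    simp only [phi, newly_upd s x y _ _ le_rfl, h3, h, if_false, upd_succ, chCur_upd s x y le_rfl]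
    split_ifs <;> ring
  have e2 : ∀ y : A → V, (∏ g, nbrW G (x g t) (y g)) * phi G α d s (upd x t y) ℓ t =
      (1 / 2) * (∏ g, nbrW G (x g t) (y g)) + (Real.exp (α / 8) - 1 / 2) *
        ((∏ g, nbrW G (x g t) (y g)) *
          (if ∃ g, y g = chCur s x (t + 1) ℓ then (0 : ℝ) else 1)) := by
    intro y
    rw [e1]
    ring
  simp only [e2, Finset.sum_add_distrib, ← Finset.mul_sum, sum_prod_nbrW hG]
  have hB : 1 ≤ Real.exp (α / 8) := Real.one_le_exp (by positivity)
  have hq : Real.exp (-(α / 4)) = (Real.exp (α / 8))⁻¹ ^ 2 := by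
    rw [← Real.exp_neg, ← Real.exp_nat_mul]
    congr 1
    push_cast
    ring
  have hu := sum_unvisited hreg hd α x t hgood (chCur s x (t + 1) ℓ)
  have hu' := mul_le_mul_of_nonneg_left hu (show 0 ≤ Real.exp (α / 8) - 1 / 2 by linarith)
  rw [hq] at hu'
  have hBq : Real.exp (α / 8) * (Real.exp (α / 8))⁻¹ = 1 := mul_inv_cancel₀ (by positivity)
  set B := Real.exp (α / 8)
  set q := B⁻¹
  have : (B - 1 / 2) * q ^ 2 = q - q ^ 2 / 2 := by
    have : B * q ^ 2 = q := by rw [pow_two, ← mul_assoc, hBq, one_mul]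
    linarith
  nlinarith [sq_nonneg (1 - q)]

/-- The product of the `entry` values of a chain and of the factors `phi`. -/
def chMart [Fintype V] (G : SimpleGraph V) (α : ℝ) (d : ℕ) (s : V) (ℓ : List ((V × ℕ) × V))
    (Y : V × ℕ → V) (t : ℕ) (x : A → ℕ → V) : ℝ :=
  (∏ e ∈ chSet ℓ, entry G s x e.1 e.2 (Y e) t) * ∏ r ∈ range t, phi G α d s x ℓ r

lemma chMart_step [Fintype V] {G : SimpleGraph V} {d : ℕ} (hreg : G.IsRegularOfDegree d)
    (hd : 0 < d) {α : ℝ} (hα : 0 < α) (s : V) (ℓ : List ((V × ℕ) × V)) (Y : V × ℕ → V)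
    (t : ℕ) (x : A → ℕ → V) :
    ∑ y : A → V, (∏ g, nbrW G (x g t) (y g)) * chMart G α d s ℓ Y (t + 1) (upd x t y) ≤
      chMart G α d s ℓ Y t x := by
  have hG : ∀ v, ∑ u, nbrW G v u = 1 := fun v => sum_nbrW (by rw [hreg.degree_eq]; exact hd)
  have hprev : ∀ y : A → V, ∏ r ∈ range t, phi G α d s (upd x t y) ℓ r =
      ∏ r ∈ range t, phi G α d s x ℓ r := fun y =>
    Finset.prod_congr rfl fun r hr => phi_upd G α d s x ℓ y (Finset.mem_range.mp hr)
  simp only [chMart, Finset.prod_range_succ, hprev]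
  have hP : 0 ≤ ∏ r ∈ range t, phi G α d s x ℓ r :=
    Finset.prod_nonneg fun r _ => phi_nonneg G α d s x ℓ r
  have hE : 0 ≤ ∏ e ∈ chSet ℓ, entry G s x e.1 e.2 (Y e) t :=
    Finset.prod_nonneg fun e _ => entry_nonneg G s x _ _ _ t
  by_cases h : (∃ e ∈ chSet ℓ, Newly s x e.1 e.2 t) ∨ ¬ GoodAt G α d x t
  · have e1 : ∀ y : A → V, phi G α d s (upd x t y) ℓ t = 1 := by
      intro y
      have h1 : ∀ g, upd x t y g t = x g t := upd_of_le x y le_rfl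
      have h3 : GoodAt G α d (upd x t y) t = GoodAt G α d x t := by simp only [GoodAt, h1]
      simp only [phi, newly_upd s x y _ _ le_rfl, h3, h, if_true]
    simp only [e1, mul_one, ← mul_assoc, ← Finset.sum_mul]
    rw [entry_step hG]
  · have e1 : ∀ y : A → V, ∏ e ∈ chSet ℓ, entry G s (upd x t y) e.1 e.2 (Y e) (t + 1) =
        ∏ e ∈ chSet ℓ, entry G s x e.1 e.2 (Y e) t := by
      intro y
      refine Finset.prod_congr rfl fun e he => ?_
      rw [entry, if_neg, entry_upd G s x y _ _ _ le_rfl]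
      rw [newly_upd s x y _ _ le_rfl]
      exact fun hn => h (Or.inl ⟨e, he, hn⟩)
    have e2 : ∀ y : A → V, (∏ g, nbrW G (x g t) (y g)) *
        ((∏ e ∈ chSet ℓ, entry G s (upd x t y) e.1 e.2 (Y e) (t + 1)) *
          ((∏ r ∈ range t, phi G α d s x ℓ r) * phi G α d s (upd x t y) ℓ t)) =
        ((∏ e ∈ chSet ℓ, entry G s x e.1 e.2 (Y e) t) * ∏ r ∈ range t, phi G α d s x ℓ r) *
          ((∏ g, nbrW G (x g t) (y g)) * phi G α d s (upd x t y) ℓ t) := by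
      intro y
      rw [e1]
      ring
    simp only [e2, ← Finset.mul_sum]
    exact mul_le_of_le_one_right (mul_nonneg hE hP) (sum_phi_le hreg hd hα s ℓ x t h)

/-- While the endpoint of a chain that agrees with the walks stays uninformed, at most `k`
steps involve a departure prescribed by the chain and at most `k` rounds see a visit to the
current vertex of the chain; all other steps contribute the large factor to `chMart`. -/
lemma prod_phi_ge [Fintype V] (G : SimpleGraph V) {α : ℝ} (hα : 0 < α) (d : ℕ) (s : V)
    (ℓ : List ((V × ℕ) × V)) (hv : chValid s ℓ) (k : ℕ) (hk : chCost ℓ ≤ k) (T : ℕ)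
    (x : A → ℕ → V) (hgood : ∀ t < T, GoodAt G α d x t) (hslow : chEnd s ℓ ∉ (vxInf s x T).1)
    (hm : ∀ e ∈ ℓ, entry G s x e.1.1 e.1.2 e.2 T ≠ 0) :
    Real.exp (α / 8) ^ T ≤
      (∏ r ∈ range T, phi G α d s x ℓ r) * (2 * Real.exp (α / 8) ^ 2) ^ k := by
  have hJ : ∑ e ∈ chSet ℓ, (e.2 + 1) ≤ k := (sum_chSet_le ℓ).trans hk
  set B := Real.exp (α / 8) with hB
  have hB1 : 1 ≤ B := Real.one_le_exp (by positivity)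
  set P1 : ℕ → Prop := fun t => ∃ e ∈ chSet ℓ, Newly s x e.1 e.2 t with hP1
  set P2 : ℕ → Prop := fun t => ∃ g, x g (t + 1) = chCur s x (t + 1) ℓ with hP2
  have c1 : ((range T).filter P1).card ≤ k := by
    refine (card_le_of_progress (progress s x (chSet ℓ)) (progress_mono s x _) P1 T ?_).trans
      ((progress_le s x _ T).trans hJ)
    rintro t - ⟨e, he, hn⟩
    exact progress_lt s x _ t he hn.1 (lt_of_le_of_lt hn.1 hn.2)
  have c2 : ((range T).filter P2).card ≤ k := by
    refine (card_le_of_progress (fun t => progress s x (chSet ℓ) (t + 1))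
      (fun a b hab => progress_mono s x _ (by lia)) P2 T ?_).trans
      ((progress_le s x _ (T + 1)).trans hJ)
    rintro t ht ⟨g, hg⟩
    have hnot : ¬ ∀ e ∈ ℓ, e.1.2 < dep s x e.1.1 (t + 1) := by
      intro hall
      exact hslow (vxInf_mono s x (show t + 1 ≤ T by lia)
        (chEnd_informed G s x (show t + 1 ≤ T by lia) hm hall))
    obtain ⟨h1, e, he, h2, h3⟩ := chCur_spec G s x (show t + 1 ≤ T by lia) ℓ hv hm hnot
    refine progress_lt s x _ (t + 1) (mem_chSet.mpr ⟨e, he, rfl⟩) h3 ?_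
    have hin : e.1.1 ∈ (vxInf s x (t + 1)).1 := by rw [h2]; exact h1
    have hpos : 0 < (occ x e.1.1 (t + 1)).card :=
      Finset.card_pos.mpr ⟨g, (mem_occ _ _ _ _).mpr (by rw [hg, h2])⟩
    rw [dep.eq_2 _ _ _ (t + 1), if_pos hin]
    lia
  have hstep : ∀ r ∈ range T, B ≤ phi G α d s x ℓ r * (if P1 r then B else 1) *
      (if P2 r then 2 * B else 1) := by
    intro r hr
    have hg := hgood r (Finset.mem_range.mp hr)
    unfold phi
    by_cases h1 : P1 r
    · rw [if_pos (Or.inl h1), if_pos h1]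
      split_ifs <;> nlinarith
    · rw [if_neg (by rintro (h | h); exacts [h1 h, h hg]), if_neg h1]
      by_cases h2 : P2 r
      · rw [if_pos h2, if_pos h2]
        linarith
      · rw [if_neg h2, if_neg h2, mul_one, mul_one]
  have hprod := Finset.prod_le_prod (fun r _ => by positivity) hstep
  rw [Finset.prod_const, Finset.card_range, Finset.prod_mul_distrib, Finset.prod_mul_distrib,
    ← Finset.prod_filter, ← Finset.prod_filter, Finset.prod_const, Finset.prod_const] at hprod
  have hP : 0 ≤ ∏ r ∈ range T, phi G α d s x ℓ r :=
    Finset.prod_nonneg fun r _ => phi_nonneg G α d s x ℓ r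
  refine hprod.trans ?_
  rw [mul_assoc]
  refine mul_le_mul_of_nonneg_left ?_ hP
  rw [show 2 * B ^ 2 = B * (2 * B) by ring, mul_pow B (2 * B)]
  have hB2 : 1 ≤ 2 * B := by linarith
  exact mul_le_mul (pow_le_pow_right₀ hB1 c1) (pow_le_pow_right₀ hB2 c2)
    (by positivity) (by positivity)

/-- Probability that a chain agrees with the stacks while VISIT-EXCHANGE, with all
neighborhoods well occupied, fails to inform its endpoint by time `T`. -/
lemma chain_bound [Fintype V] [Nonempty V] {G : SimpleGraph V} {d : ℕ}
    (hreg : G.IsRegularOfDegree d)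
    (hd : 0 < d) {α : ℝ} (hα : 0 < α) (s : V) (ℓ : List ((V × ℕ) × V)) (hv : chValid s ℓ)
    (Y : V × ℕ → V) (hY : ∀ e ∈ ℓ, Y e.1 = e.2) (k : ℕ) (hk : chCost ℓ ≤ k) (T : ℕ) :
    walksE (A := A) G T (fun x =>
      if (∀ t < T, GoodAt G α d x t) ∧ chEnd s ℓ ∉ (vxInf s x T).1 then
        ∏ e ∈ chSet ℓ, entry G s x e.1 e.2 (Y e) T else 0) * Real.exp (α / 8) ^ T ≤
      (∏ e ∈ chSet ℓ, nbrW G e.1 (Y e)) * (2 * Real.exp (α / 8) ^ 2) ^ k := by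
  have hG : ∀ v, ∑ u, nbrW G v u = 1 := fun v => sum_nbrW (by rw [hreg.degree_eq]; exact hd)
  have h1 := walksE_supermart hG (fun t (x : A → ℕ → V) => chMart G α d s ℓ Y t x)
    (fun t x => chMart_step hreg hd hα s ℓ Y t x) T
  have h2 : walksE (A := A) G 0 (chMart G α d s ℓ Y 0) = ∏ e ∈ chSet ℓ, nbrW G e.1 (Y e) := by
    rw [← walksE_zero_const (A := A) (sum_statW hreg hd) (∏ e ∈ chSet ℓ, nbrW G e.1 (Y e))]
    congr 1
    funext x
    simp [chMart, entry]
  have h3 : walksE (A := A) G T (fun x =>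
      if (∀ t < T, GoodAt G α d x t) ∧ chEnd s ℓ ∉ (vxInf s x T).1 then
        ∏ e ∈ chSet ℓ, entry G s x e.1 e.2 (Y e) T else 0) * Real.exp (α / 8) ^ T ≤
      (2 * Real.exp (α / 8) ^ 2) ^ k * walksE (A := A) G T (chMart G α d s ℓ Y T) := by
    rw [mul_comm, ← walksE_mul_left, ← walksE_mul_left]
    refine walksE_mono G T fun x => ?_
    have hP : 0 ≤ ∏ r ∈ range T, phi G α d s x ℓ r :=
      Finset.prod_nonneg fun r _ => phi_nonneg G α d s x ℓ r
    have hE : 0 ≤ ∏ e ∈ chSet ℓ, entry G s x e.1 e.2 (Y e) T :=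
      Finset.prod_nonneg fun e _ => entry_nonneg G s x _ _ _ T
    have hM : 0 ≤ chMart G α d s ℓ Y T x := mul_nonneg hE hP
    split_ifs with h
    · by_cases hm : ∀ e ∈ ℓ, entry G s x e.1.1 e.1.2 e.2 T ≠ 0
      · have := prod_phi_ge G hα d s ℓ hv k hk T x h.1 h.2 hm
        have := mul_le_mul_of_nonneg_right this hE
        rw [chMart]
        linarith
      · push Not at hm
        obtain ⟨e, he, h0⟩ := hm
        rw [Finset.prod_eq_zero (mem_chSet.mpr ⟨e, he, rfl⟩) (by rw [hY e he]; exact h0),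
          mul_zero]
        positivity
    · rw [mul_zero]
      positivity
  rw [mul_comm (∏ e ∈ chSet ℓ, nbrW G e.1 (Y e))]
  refine h3.trans (mul_le_mul_of_nonneg_left (h1.trans h2.le) (by positivity))

end Rumor

namespace Rumor

variable {V : Type*} {A : Type*}

/-! ### PUSH in terms of stacks of samples -/

/-- The chains along which PUSH may inform a vertex within `t` rounds: in every round a chain
is either kept, or extended by a step performed in this round. -/
def chains [Fintype V] (s : V) : ℕ → Finset (List ((V × ℕ) × V))
  | 0 => {[]}
  | t + 1 => chains s t ∪ (chains s t ×ˢ univ).image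
      (fun p => ((chEnd s p.1, t - chCost p.1), p.2) :: p.1)

lemma chains_spec [Fintype V] (s : V) (t : ℕ) :
    ∀ ℓ ∈ chains s t, chValid s ℓ ∧ chCost ℓ ≤ t := by
  induction t with
  | zero =>
    intro ℓ hℓ
    rw [chains, Finset.mem_singleton] at hℓ
    subst hℓ
    exact ⟨trivial, le_rfl⟩
  | succ t ih =>
    intro ℓ hℓ
    rw [chains, Finset.mem_union, Finset.mem_image] at hℓ
    rcases hℓ with h | ⟨⟨ℓ', v⟩, h, rfl⟩
    · exact ⟨(ih ℓ h).1, by have := (ih ℓ h).2; lia⟩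
    · have h' := ih ℓ' (Finset.mem_product.mp h).1
      refine ⟨⟨rfl, h'.1⟩, ?_⟩
      have := h'.2
      simp only [chCost]
      lia

/-- Probability weight of a chain that does not use a stack position twice. -/
def chW [Fintype V] (G : SimpleGraph V) (ℓ : List ((V × ℕ) × V)) : ℝ :=
  (ℓ.map (fun e => nbrW G e.1.1 e.2)).prod

lemma chW_nonneg [Fintype V] (G : SimpleGraph V) (ℓ : List ((V × ℕ) × V)) : 0 ≤ chW G ℓ := by
  refine List.prod_nonneg fun a ha => ?_
  obtain ⟨e, -, rfl⟩ := List.mem_map.mp ha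
  exact nbrW_nonneg _ _ _

/-- The total weight of the chains at most doubles in every round. -/
lemma sum_chW_le [Fintype V] (G : SimpleGraph V) (s : V) (t : ℕ) :
    ∑ ℓ ∈ chains s t, chW G ℓ ≤ 2 ^ t := by
  induction t with
  | zero => simp [chains, chW]
  | succ t ih =>
    have h1 : ∑ ℓ ∈ (chains s t ×ˢ univ).image
        (fun p : List ((V × ℕ) × V) × V => ((chEnd s p.1, t - chCost p.1), p.2) :: p.1),
        chW G ℓ ≤ ∑ ℓ ∈ chains s t, chW G ℓ := by
      rw [Finset.sum_image, Finset.sum_product]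
      · refine Finset.sum_le_sum fun ℓ _ => ?_
        simp only [chW, List.map_cons, List.prod_cons, ← Finset.sum_mul]
        exact mul_le_of_le_one_left (chW_nonneg G ℓ) (sum_nbrW_le G _)
      · rintro ⟨ℓ, v⟩ - ⟨ℓ', v'⟩ - h
        simp only [List.cons.injEq, Prod.mk.injEq] at h
        exact Prod.ext h.2 h.1.2
    have h2 := Finset.sum_union_inter (s₁ := chains s t) (s₂ := (chains s t ×ˢ univ).image
      (fun p : List ((V × ℕ) × V) × V => ((chEnd s p.1, t - chCost p.1), p.2) :: p.1))
      (f := chW G)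
    have h3 := Finset.sum_nonneg (s := chains s t ∩ (chains s t ×ˢ univ).image
      (fun p : List ((V × ℕ) × V) × V => ((chEnd s p.1, t - chCost p.1), p.2) :: p.1))
      (f := chW G) fun ℓ _ => chW_nonneg G ℓ
    rw [chains, pow_succ]
    linarith

lemma prod_chSet [Fintype V] (G : SimpleGraph V) (ℓ : List ((V × ℕ) × V))
    (hnd : (ℓ.map Prod.fst).Nodup) (Y : V × ℕ → V) (hY : ∀ e ∈ ℓ, Y e.1 = e.2) :
    ∏ e ∈ chSet ℓ, nbrW G e.1 (Y e) = chW G ℓ := by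
  rw [chSet, List.prod_toFinset _ hnd, chW, List.map_map]
  congr 1
  refine List.map_congr_left fun e he => ?_
  simp [hY e he]

/-- The round in which PUSH informs `u`. -/
def ptime (s : V) (σ : ℕ → V → V) (u : V) : ℕ := sInf {t | u ∈ pushInf s σ t}

lemma pushInf_mono (s : V) (σ : ℕ → V → V) : Monotone (pushInf s σ) :=
  monotone_nat_of_le_succ fun _ => Set.subset_union_left

lemma ptime_le {s : V} {σ : ℕ → V → V} {u : V} {t : ℕ} (h : u ∈ pushInf s σ t) :
    ptime s σ u ≤ t := Nat.sInf_le h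

lemma mem_ptime {s : V} {σ : ℕ → V → V} {u : V} {t : ℕ} (h : u ∈ pushInf s σ t) :
    u ∈ pushInf s σ (ptime s σ u) := Nat.sInf_mem (s := {t | u ∈ pushInf s σ t}) ⟨t, h⟩

/-- Stacks associated with the samples `σ` of PUSH: the `i`-th entry of the stack of `u` is the
`i`-th vertex sampled by `u` after it has been informed. The samples drawn before that are put
(cyclically) at the end of the stack, which makes this a bijection. -/
def restack {k : ℕ} [NeZero k] (s : V) (σ : Fin k → V → V) : Fin k → V → V :=
  fun i u => σ (i + Fin.ofNat k (ptime s (extV σ) u)) u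

lemma extV_restack {k : ℕ} [NeZero k] (s : V) (σ : Fin k → V → V) {t : ℕ} (ht : t < k) {u : V}
    (hu : ptime s (extV σ) u ≤ t) :
    extV (restack s σ) (t - ptime s (extV σ) u) u = extV σ t u := by
  have h1 : t - ptime s (extV σ) u < k := by lia
  rw [extV, dif_pos h1, restack]
  conv_rhs => rw [extV, dif_pos ht]
  congr 1
  ext
  simp only [Fin.val_add, Fin.val_ofNat, Nat.add_mod_mod]
  rw [Nat.sub_add_cancel hu, Nat.mod_eq_of_lt ht]

lemma restack_injective {k : ℕ} [NeZero k] (s : V) :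
    Function.Injective (restack (k := k) s) := by
  intro σ σ' h
  have key : ∀ t, ∀ r ≤ t, pushInf s (extV σ) r = pushInf s (extV σ') r := by
    intro t
    induction t with
    | zero =>
      intro r hr
      obtain rfl : r = 0 := by lia
      rfl
    | succ t ih =>
      intro r hr
      rcases Nat.lt_or_ge r (t + 1) with hr' | hr'
      · exact ih r (by lia)
      obtain rfl : r = t + 1 := by lia
      have e := ih t le_rfl
      simp only [pushInf, e]
      congr 1
      refine Set.image_congr fun u hu => ?_
      rcases Nat.lt_or_ge t k with htk | htk
      · have hu' : u ∈ pushInf s (extV σ) t := by rw [e]; exact hu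
        have e1 : ptime s (extV σ) u = ptime s (extV σ') u := by
          refine le_antisymm (ptime_le ?_) (ptime_le ?_)
          · rw [ih _ (ptime_le hu)]
            exact mem_ptime hu
          · rw [← ih _ (ptime_le hu')]
            exact mem_ptime hu'
        rw [← extV_restack s σ htk (ptime_le hu'), ← extV_restack s σ' htk (ptime_le hu), h, e1]
      · simp [extV, not_lt.mpr htk]
  have e : ∀ u, ptime s (extV σ) u = ptime s (extV σ') u := by
    intro u
    simp only [ptime, fun t => key t t le_rfl]
  funext i u
  have := congrFun (congrFun h (i - Fin.ofNat k (ptime s (extV σ) u))) u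
  simpa [restack, e u] using this

lemma restack_weight [Fintype V] (G : SimpleGraph V) {k : ℕ} [NeZero k] (s : V)
    (σ : Fin k → V → V) :
    ∏ t, ∏ v, nbrW G v (restack s σ t v) = ∏ t, ∏ v, nbrW G v (σ t v) := by
  rw [Finset.prod_comm, Finset.prod_comm (f := fun t v => nbrW G v (σ t v))]
  refine Finset.prod_congr rfl fun v _ => ?_
  exact Equiv.prod_comp (Equiv.addRight (Fin.ofNat k (ptime s (extV σ) v)))
    (fun t => nbrW G v (σ t v))

/-- The chain `ℓ` agrees with the stacks `π`. -/
def Matches {k : ℕ} (π : Fin k → V → V) (ℓ : List ((V × ℕ) × V)) : Prop :=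
  ∀ e ∈ ℓ, e.1.2 < k ∧ extV π e.1.2 e.1.1 = e.2

/-- Every vertex informed by PUSH is the endpoint of a chain that agrees with the stacks. -/
lemma exists_chain [Fintype V] {k : ℕ} [NeZero k] (s : V) (σ : Fin k → V → V) (t : ℕ)
    (ht : t ≤ k) : ∀ v ∈ pushInf s (extV σ) t, ∃ ℓ ∈ chains s t, chEnd s ℓ = v ∧
      chCost ℓ = ptime s (extV σ) v ∧ (ℓ.map Prod.fst).Nodup ∧
      (∀ e ∈ ℓ, ptime s (extV σ) e.1.1 < ptime s (extV σ) v) ∧ Matches (restack s σ) ℓ := by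
  induction t with
  | zero =>
    intro v hv
    refine ⟨[], by simp [chains], ?_, ?_, by simp, by simp, by simp [Matches]⟩
    · exact hv.symm
    · have := ptime_le hv
      simp only [chCost]
      lia
  | succ t ih =>
    intro v hv
    by_cases hvt : v ∈ pushInf s (extV σ) t
    · obtain ⟨ℓ, h1, h2⟩ := ih (by lia) v hvt
      exact ⟨ℓ, Finset.mem_union_left _ h1, h2⟩
    rcases hv with hv' | ⟨u, hu, rfl⟩
    · exact absurd hv' hvt
    obtain ⟨ℓ, h1, h2, h3, h4, h5, h6⟩ := ih (by lia) u hu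
    have hτu := ptime_le hu
    have hmem : extV σ t u ∈ pushInf s (extV σ) (t + 1) := Or.inr ⟨u, hu, rfl⟩
    have hτ : ptime s (extV σ) (extV σ t u) = t + 1 := by
      refine le_antisymm (ptime_le hmem) ?_
      by_contra hcon
      exact hvt (pushInf_mono s _ (show ptime s (extV σ) (extV σ t u) ≤ t by lia)
        (mem_ptime hmem))
    refine ⟨((u, t - ptime s (extV σ) u), extV σ t u) :: ℓ, ?_, rfl, ?_, ?_, ?_, ?_⟩
    · refine Finset.mem_union_right _ (Finset.mem_image.mpr ⟨(ℓ, extV σ t u), ?_, ?_⟩)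
      · simp [h1]
      · simp [h2, h3]
    · simp only [chCost, h3, hτ]
      lia
    · rw [List.map_cons, List.nodup_cons]
      refine ⟨fun hin => ?_, h4⟩
      obtain ⟨e, he, he'⟩ := List.mem_map.mp hin
      have := h5 e he
      rw [he'] at this
      exact lt_irrefl _ this
    · intro e he
      rw [hτ]
      rcases List.mem_cons.mp he with rfl | he
      · exact Nat.lt_succ_of_le hτu
      · have := h5 e he
        lia
    · intro e he
      rcases List.mem_cons.mp he with rfl | he
      · exact ⟨by simp only; lia, extV_restack s σ (by lia) hτu⟩
      · exact h6 e he

/-- The chains that use no stack position twice. -/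
def goodChains [Fintype V] (s : V) (k : ℕ) : Finset (List ((V × ℕ) × V)) :=
  (chains s k).filter (fun ℓ => (ℓ.map Prod.fst).Nodup)

/-- The probability that PUSH succeeds is at most the probability that, for independent stacks
of uniform samples, every vertex is the endpoint of a chain that agrees with them. -/
lemma pushProbLe_le_stacks [Fintype V] (G : SimpleGraph V) (s : V) (k : ℕ) [NeZero k] :
    pushProbLe G s k ≤ ∑ π : Fin k → V → V, (∏ t, ∏ v, nbrW G v (π t v)) *
      (if ∀ v, ∃ ℓ ∈ goodChains s k, chEnd s ℓ = v ∧ Matches π ℓ then 1 else 0) := by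
  have hbij : Function.Bijective (restack (k := k) (V := V) s) :=
    Finite.injective_iff_bijective.mp (restack_injective s)
  rw [← hbij.sum_comp]
  unfold pushProbLe
  refine Finset.sum_le_sum fun σ _ => ?_
  rw [restack_weight]
  have h0 : 0 ≤ ∏ t, ∏ v, nbrW G v (σ t v) :=
    Finset.prod_nonneg fun t _ => Finset.prod_nonneg fun v _ => nbrW_nonneg _ _ _
  split_ifs with h1 h2 h2
  · simp
  · exfalso
    apply h2
    intro v
    obtain ⟨ℓ, h3, h4, -, h5, -, h6⟩ := exists_chain s σ k le_rfl v (by rw [h1]; trivial)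
    exact ⟨ℓ, Finset.mem_filter.mpr ⟨h3, h5⟩, h4, h6⟩
  · simpa using h0
  · simp

end Rumor

namespace Rumor

variable {V : Type*} {A : Type*}

/-! ### Comparison of PUSH and VISIT-EXCHANGE -/

lemma prod_full [Fintype V] {k : ℕ} (π : Fin k → V → V) (f : V × ℕ → V → ℝ) :
    ∏ e ∈ (univ : Finset V) ×ˢ range k, f e (extV π e.2 e.1) =
      ∏ t : Fin k, ∏ v : V, f (v, (t : ℕ)) (π t v) := by
  rw [Finset.prod_product_right, Finset.prod_range]
  refine Finset.prod_congr rfl fun t _ => Finset.prod_congr rfl fun v _ => ?_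
  simp [extV]

/-- For independent stacks with distributions `p`, the probability of prescribed values `Y` at
the positions in `J`. -/
lemma sum_stacks [Fintype V] {k : ℕ} (p : V × ℕ → V → ℝ) (hp : ∀ e, ∑ z, p e z = 1)
    (J : Finset (V × ℕ)) (hJ : ∀ e ∈ J, e.2 < k) (Y : V × ℕ → V) :
    ∑ π : Fin k → V → V, (∏ t : Fin k, ∏ v : V, p (v, (t : ℕ)) (π t v)) *
      (if ∀ e ∈ J, extV π e.2 e.1 = Y e then 1 else 0) = ∏ e ∈ J, p e (Y e) := by
  have e1 : ∀ π : Fin k → V → V, (∏ t : Fin k, ∏ v : V, p (v, (t : ℕ)) (π t v)) *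
      (if ∀ e ∈ J, extV π e.2 e.1 = Y e then 1 else 0) =
      ∏ t : Fin k, ∏ v : V, p (v, (t : ℕ)) (π t v) *
        (if (v, (t : ℕ)) ∈ J then (if π t v = Y (v, (t : ℕ)) then 1 else 0) else 1) := by
    intro π
    simp only [Finset.prod_mul_distrib]
    congr 1
    split_ifs with h
    · symm
      refine Finset.prod_eq_one fun t _ => Finset.prod_eq_one fun v _ => ?_
      split_ifs with h1 h2
      · rfl
      · exact absurd (by simpa [extV] using h _ h1) h2
      · rfl
    · push Not at h
      obtain ⟨⟨v, i⟩, he, hne⟩ := h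
      have hi : i < k := hJ _ he
      symm
      refine Finset.prod_eq_zero (Finset.mem_univ ⟨i, hi⟩)
        (Finset.prod_eq_zero (Finset.mem_univ v) ?_)
      rw [if_pos he, if_neg]
      simpa [extV, hi] using hne
  simp only [e1]
  rw [← Fintype.prod_sum (κ := fun _ : Fin k => V → V) (fun t ρ => ∏ v : V, p (v, (t : ℕ)) (ρ v) *
        (if (v, (t : ℕ)) ∈ J then (if ρ v = Y (v, (t : ℕ)) then 1 else 0) else 1))]
  have e2 : ∀ t : Fin k, ∑ ρ : V → V, ∏ v : V, p (v, (t : ℕ)) (ρ v) *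
        (if (v, (t : ℕ)) ∈ J then (if ρ v = Y (v, (t : ℕ)) then 1 else 0) else 1) =
      ∏ v : V, if (v, (t : ℕ)) ∈ J then p (v, (t : ℕ)) (Y (v, (t : ℕ))) else 1 := by
    intro t
    rw [← Fintype.prod_sum (κ := fun _ : V => V) (fun v z => p (v, (t : ℕ)) z *
        (if (v, (t : ℕ)) ∈ J then (if z = Y (v, (t : ℕ)) then 1 else 0) else 1))]
    refine Finset.prod_congr rfl fun v _ => ?_
    split_ifs with h
    · simp
    · simp [hp]
  simp only [e2]
  have e3 := Finset.prod_product_right (univ : Finset V) (range k)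
    (fun e => if e ∈ J then p e (Y e) else 1)
  rw [Finset.prod_range] at e3
  rw [← e3, ← Finset.prod_filter]
  congr 1
  ext e
  simp only [Finset.mem_filter, Finset.mem_product, Finset.mem_univ, true_and, Finset.mem_range]
  exact ⟨fun h => h.2, fun h => ⟨hJ e h, h⟩⟩

/-- The values prescribed by a chain (with an arbitrary default elsewhere). -/
def chVal (s : V) (ℓ : List ((V × ℕ) × V)) (e : V × ℕ) : V :=
  if h : ∃ v, (e, v) ∈ ℓ then h.choose else s

lemma chVal_spec (s : V) {ℓ : List ((V × ℕ) × V)} (hnd : (ℓ.map Prod.fst).Nodup) :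
    ∀ e ∈ ℓ, chVal s ℓ e.1 = e.2 := by
  intro e he
  have hex : ∃ v, (e.1, v) ∈ ℓ := ⟨e.2, he⟩
  have h1 : (e.1, chVal s ℓ e.1) ∈ ℓ := by
    rw [chVal, dif_pos hex]
    exact hex.choose_spec
  have := List.inj_on_of_nodup_map hnd h1 he rfl
  rw [← this]

/-- The probability that PUSH finishes within `k` rounds exceeds the probability that
VISIT-EXCHANGE finishes within `T` rounds by at most the probability that some neighborhood is
badly occupied before time `T`, plus an error which is exponentially small if `T` is a large
multiple of `k`. -/
lemma push_le_vx [Fintype V] [Nonempty V] [Fintype A] {G : SimpleGraph V} {d : ℕ}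
    (hreg : G.IsRegularOfDegree d) (hd : 0 < d) {α : ℝ} (hα : 0 < α) (s : V) (k : ℕ) [NeZero k]
    (T : ℕ) :
    pushProbLe G s k ≤ walksE (A := A) G T (fun x => if (vxInf s x T).1 = Set.univ then 1 else 0) +
      walksE (A := A) G T (fun x => if ∀ t < T, GoodAt G α d x t then 0 else 1) +
      2 ^ k * (2 * Real.exp (α / 8) ^ 2) ^ k / Real.exp (α / 8) ^ T := by
  have hG : ∀ v, ∑ u, nbrW G v u = 1 := fun v => sum_nbrW (by rw [hreg.degree_eq]; exact hd)
  have hs := sum_statW hreg hd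
  have hvals : ∀ ℓ ∈ goodChains s k, ∀ e ∈ ℓ, chVal s ℓ e.1 = e.2 := fun ℓ hℓ =>
    chVal_spec s (Finset.mem_filter.mp hℓ).2
  -- the stack entries read off the walks, with the unread ones replaced by their distribution
  set N : (A → ℕ → V) → (Fin k → V → V) → ℝ := fun x π =>
    ∏ t : Fin k, ∏ v : V, entry G s x v t (π t v) T with hN
  have hN0 : ∀ x π, 0 ≤ N x π := fun x π =>
    Finset.prod_nonneg fun t _ => Finset.prod_nonneg fun v _ => entry_nonneg _ _ _ _ _ _ _
  have hp : ∀ x : A → ℕ → V, ∀ e : V × ℕ, ∑ z, entry G s x e.1 e.2 z T = 1 := fun x e =>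
    sum_entry hG s x e.1 e.2 T
  have hN1 : ∀ x, ∑ π, N x π = 1 := by
    intro x
    have := sum_stacks (k := k) (fun e z => entry G s x e.1 e.2 z T) (hp x) ∅ (by simp)
      (fun _ => s)
    simpa using this
  have hW : ∀ π : Fin k → V → V, ∏ t, ∏ v, nbrW G v (π t v) = walksE G T (fun x => N x π) := by
    intro π
    have h1 := walksE_entry (A := A) hG hs s (univ ×ˢ range k) (fun e => extV π e.2 e.1) T
    rw [prod_full π (fun e z => nbrW G e.1 z)] at h1
    rw [← h1]
    congr 1
    funext x
    rw [prod_full π (fun e z => entry G s x e.1 e.2 z T)]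
  set Q : (Fin k → V → V) → Prop := fun π =>
    ∀ v, ∃ ℓ ∈ goodChains s k, chEnd s ℓ = v ∧ Matches π ℓ with hQ
  set F : List ((V × ℕ) × V) → (A → ℕ → V) → ℝ := fun ℓ x =>
    if (∀ t < T, GoodAt G α d x t) ∧ chEnd s ℓ ∉ (vxInf s x T).1 then
      ∏ e ∈ chSet ℓ, entry G s x e.1 e.2 (chVal s ℓ e) T else 0 with hF
  have hF0 : ∀ ℓ x, 0 ≤ F ℓ x := by
    intro ℓ x
    simp only [hF]
    split_ifs
    · exact Finset.prod_nonneg fun e _ => entry_nonneg _ _ _ _ _ _ _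
    · exact le_rfl
  have hone : ∀ x : A → ℕ → V, ∑ π, N x π * (if Q π then 1 else 0) ≤ 1 := by
    intro x
    refine le_trans ?_ (hN1 x).le
    refine Finset.sum_le_sum fun π _ => ?_
    have := hN0 x π
    split_ifs <;> simp [this]
  have hpt : ∀ x : A → ℕ → V, ∑ π, N x π * (if Q π then 1 else 0) ≤
      (if (vxInf s x T).1 = Set.univ then 1 else 0) +
      (if ∀ t < T, GoodAt G α d x t then 0 else 1) + ∑ ℓ ∈ goodChains s k, F ℓ x := by
    intro x
    have hsum : 0 ≤ ∑ ℓ ∈ goodChains s k, F ℓ x := Finset.sum_nonneg fun ℓ _ => hF0 ℓ x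
    by_cases hc : (vxInf s x T).1 = Set.univ
    · rw [if_pos hc]
      have := hone x
      split_ifs <;> linarith
    by_cases hg : ∀ t < T, GoodAt G α d x t
    swap
    · rw [if_neg hc, if_neg hg]
      have := hone x
      linarith
    rw [if_neg hc, if_pos hg, zero_add, zero_add]
    obtain ⟨v, hv⟩ := (Set.ne_univ_iff_exists_notMem _).mp hc
    have hℓ : ∀ ℓ ∈ goodChains s k,
        ∑ π : Fin k → V → V, N x π * (if chEnd s ℓ = v ∧ Matches π ℓ then 1 else 0) ≤ F ℓ x := by
      intro ℓ hℓ
      by_cases hend : chEnd s ℓ = v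
      swap
      · simpa [hend] using hF0 ℓ x
      by_cases hlt : ∀ e ∈ chSet ℓ, e.2 < k
      swap
      · have : ∀ π : Fin k → V → V, ¬ Matches π ℓ := by
          intro π hm
          apply hlt
          intro e he
          obtain ⟨e', he', rfl⟩ := mem_chSet.mp he
          exact (hm e' he').1
        simpa [this] using hF0 ℓ x
      have hst := sum_stacks (k := k) (fun e z => entry G s x e.1 e.2 z T) (hp x) (chSet ℓ) hlt
        (chVal s ℓ)
      have hFe : F ℓ x = ∏ e ∈ chSet ℓ, entry G s x e.1 e.2 (chVal s ℓ e) T := by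
        simp only [hF]
        rw [if_pos ⟨hg, by rw [hend]; exact hv⟩]
      rw [hFe, ← hst]
      refine Finset.sum_le_sum fun π _ => mul_le_mul_of_nonneg_left ?_ (hN0 x π)
      split_ifs with h1 h2
      · exact le_rfl
      · exfalso
        apply h2
        intro e he
        obtain ⟨e', he', rfl⟩ := mem_chSet.mp he
        rw [hvals ℓ hℓ e' he']
        exact (h1.2 e' he').2
      · exact zero_le_one
      · exact le_rfl
    refine le_trans ?_ (Finset.sum_le_sum hℓ)
    rw [Finset.sum_comm]
    refine Finset.sum_le_sum fun π _ => ?_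
    rw [← Finset.mul_sum]
    refine mul_le_mul_of_nonneg_left ?_ (hN0 x π)
    split_ifs with hq
    · obtain ⟨ℓ, h1, h2⟩ := hq v
      have h3 := Finset.single_le_sum (f := fun ℓ => if chEnd s ℓ = v ∧ Matches π ℓ then (1 : ℝ)
        else 0) (fun ℓ _ => by positivity) h1
      simpa [h2] using h3
    · exact Finset.sum_nonneg fun ℓ _ => by positivity
  have hB : 0 < Real.exp (α / 8) ^ T := by positivity
  have hchain : ∑ ℓ ∈ goodChains s k, walksE G T (F ℓ) ≤
      2 ^ k * (2 * Real.exp (α / 8) ^ 2) ^ k / Real.exp (α / 8) ^ T := by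
    rw [le_div_iff₀ hB, Finset.sum_mul]
    have h1 : ∀ ℓ ∈ goodChains s k, walksE G T (F ℓ) * Real.exp (α / 8) ^ T ≤
        chW G ℓ * (2 * Real.exp (α / 8) ^ 2) ^ k := by
      intro ℓ hℓ
      obtain ⟨hc, hnd⟩ := Finset.mem_filter.mp hℓ
      obtain ⟨hv, hk⟩ := chains_spec s k ℓ hc
      rw [← prod_chSet G ℓ hnd (chVal s ℓ) (hvals ℓ hℓ)]
      exact chain_bound hreg hd hα s ℓ hv (chVal s ℓ) (hvals ℓ hℓ) k hk T
    refine (Finset.sum_le_sum h1).trans ?_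
    rw [← Finset.sum_mul]
    refine mul_le_mul_of_nonneg_right ?_ (by positivity)
    refine le_trans ?_ (sum_chW_le G s k)
    exact Finset.sum_le_sum_of_subset_of_nonneg (Finset.filter_subset _ _)
      fun ℓ _ _ => chW_nonneg G ℓ
  calc pushProbLe G s k
      ≤ ∑ π : Fin k → V → V, (∏ t, ∏ v, nbrW G v (π t v)) * (if Q π then 1 else 0) :=
        pushProbLe_le_stacks G s k
    _ = walksE (A := A) G T (fun x => ∑ π, N x π * (if Q π then 1 else 0)) := by
        rw [walksE_sum]
        refine Finset.sum_congr rfl fun π _ => ?_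
        rw [hW, mul_comm, ← walksE_mul_left]
        simp only [mul_comm]
    _ ≤ _ := walksE_mono G T hpt
    _ ≤ _ := by
        rw [walksE_add, walksE_add, walksE_sum]
        linarith

end Rumor

namespace Rumor

variable {V : Type*} {A : Type*}

/-! ### Occupation of the neighborhoods -/

lemma statW_eq [Fintype V] {G : SimpleGraph V} {d : ℕ} (hreg : G.IsRegularOfDegree d)
    (hd : 0 < d) (v : V) : statW G v = 1 / (Fintype.card V : ℝ) := by
  unfold statW
  simp only [hreg.degree_eq, Finset.sum_const, Finset.card_univ, nsmul_eq_mul]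
  have : (d : ℝ) ≠ 0 := by exact_mod_cast hd.ne'
  field_simp

lemma statW_stationary [Fintype V] {G : SimpleGraph V} {d : ℕ} (hreg : G.IsRegularOfDegree d)
    (hd : 0 < d) (u : V) : ∑ v, statW G v * nbrW G v u = statW G u := by
  have h : ∀ v, nbrW G v u = nbrW G u v := by
    intro v
    simp only [nbrW, hreg.degree_eq, G.adj_comm]
  simp only [statW_eq hreg hd, h, ← Finset.mul_sum]
  rw [sum_nbrW (by rw [hreg.degree_eq]; exact hd), mul_one]

lemma walksE_of_le [Fintype V] [Fintype A] {G : SimpleGraph V}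
    (hG : ∀ v, ∑ u, nbrW G v u = 1) {t T : ℕ} (h : t ≤ T) (f : (A → ℕ → V) → ℝ)
    (hf : ∀ k, t ≤ k → ∀ x y, f (upd x k y) = f x) : walksE G T f = walksE G t f := by
  induction T, h using Nat.le_induction with
  | base => rfl
  | succ T hT ih => rw [walksE_succ_of_inv hG T f (hf T hT), ih]

/-- A Chernoff bound for the number of agents in the neighborhood of `u` at time `t`. -/
lemma low_occupation [Fintype V] [Nonempty V] [Fintype A] {G : SimpleGraph V} {d : ℕ}
    (hreg : G.IsRegularOfDegree d) (hd : 0 < d) {α : ℝ}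
    (ha : α * Fintype.card V ≤ Fintype.card A) (u : V) (t : ℕ) :
    walksE (A := A) G t (fun x =>
      if α * d / 4 ≤ ((univ.filter (fun g => G.Adj u (x g t))).card : ℝ) then 0 else 1) ≤
      Real.exp (-(α * d / 4)) := by
  have hG : ∀ v, ∑ u, nbrW G v u = 1 := fun v => sum_nbrW (by rw [hreg.degree_eq]; exact hd)
  set f : V → ℝ := fun v => if G.Adj u v then 1 / 2 else 1 with hf
  have hn : (0 : ℝ) < Fintype.card V := by exact_mod_cast Fintype.card_pos
  have hdpos : (0 : ℝ) < d := by exact_mod_cast hd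
  have hf' : ∀ v, f v = 1 - d / 2 * nbrW G u v := by
    intro v
    simp only [hf, nbrW, hreg.degree_eq]
    split_ifs
    · field_simp
      norm_num
    · ring
  have hsum : ∑ v, statW G v * f v = 1 - d / (2 * Fintype.card V) := by
    simp only [statW_eq hreg hd, hf', ← Finset.mul_sum, Finset.sum_sub_distrib, hG,
      Finset.sum_const, Finset.card_univ, nsmul_eq_mul]
    field_simp
  have hsum0 : 0 ≤ ∑ v, statW G v * f v :=
    Finset.sum_nonneg fun v _ => mul_nonneg (statW_nonneg _ _) (by simp only [hf]; positivity)
  have hE := walksE_prod (A := A) hG (statW_stationary hreg hd) t f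
  have h1 : walksE (A := A) G t (fun x =>
      if α * d / 4 ≤ ((univ.filter (fun g => G.Adj u (x g t))).card : ℝ) then 0 else 1) ≤
      walksE (A := A) G t (fun x => Real.exp (α * d / 4) * ∏ g, f (x g t)) := by
    refine walksE_mono G t fun x => ?_
    have hp : ∏ g, f (x g t) = (1 / 2) ^ (univ.filter (fun g => G.Adj u (x g t))).card := by
      simp only [hf]
      rw [← Finset.prod_filter, Finset.prod_const]
    rw [hp]
    split_ifs with h
    · positivity
    · push Not at h
      set m := (univ.filter (fun g => G.Adj u (x g t))).card
      have h2 : Real.exp (-1) ≤ 1 / 2 := by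
        rw [Real.exp_neg, inv_eq_one_div]
        exact one_div_le_one_div_of_le (by norm_num) (by linarith [Real.add_one_le_exp (1 : ℝ)])
      have h3 : Real.exp (-(m : ℝ)) ≤ (1 / 2) ^ m := by
        have := pow_le_pow_left₀ (Real.exp_pos _).le h2 m
        rwa [← Real.exp_nat_mul, mul_neg, mul_one] at this
      calc (1 : ℝ) ≤ Real.exp (α * d / 4 + -(m : ℝ)) := Real.one_le_exp (by linarith)
        _ = Real.exp (α * d / 4) * Real.exp (-(m : ℝ)) := Real.exp_add _ _
        _ ≤ _ := mul_le_mul_of_nonneg_left h3 (Real.exp_pos _).le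
  refine h1.trans ?_
  rw [walksE_mul_left, hE]
  have h4 : (∑ v, statW G v * f v) ^ Fintype.card A ≤ Real.exp (-(α * d / 2)) := by
    calc (∑ v, statW G v * f v) ^ Fintype.card A
        ≤ Real.exp (-(d / (2 * Fintype.card V))) ^ Fintype.card A := by
          refine pow_le_pow_left₀ hsum0 ?_ _
          rw [hsum]
          exact Real.one_sub_le_exp_neg _
      _ = Real.exp (Fintype.card A * -(d / (2 * Fintype.card V))) := (Real.exp_nat_mul _ _).symm
      _ ≤ Real.exp (-(α * d / 2)) := by
          rw [Real.exp_le_exp]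
          have : α * d / 2 = (α * Fintype.card V) * (d / (2 * Fintype.card V)) := by
            field_simp
          rw [this, mul_neg, neg_le_neg_iff]
          exact mul_le_mul_of_nonneg_right ha (by positivity)
  calc Real.exp (α * d / 4) * (∑ v, statW G v * f v) ^ Fintype.card A
      ≤ Real.exp (α * d / 4) * Real.exp (-(α * d / 2)) :=
        mul_le_mul_of_nonneg_left h4 (Real.exp_pos _).le
    _ = Real.exp (-(α * d / 4)) := by
        rw [← Real.exp_add]
        congr 1
        ring

lemma bad_prob_le [Fintype V] [Nonempty V] [Fintype A] {G : SimpleGraph V} {d : ℕ}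
    (hreg : G.IsRegularOfDegree d) (hd : 0 < d) {α : ℝ}
    (ha : α * Fintype.card V ≤ Fintype.card A) (T : ℕ) :
    walksE (A := A) G T (fun x => if ∀ t < T, GoodAt G α d x t then 0 else 1) ≤
      T * Fintype.card V * Real.exp (-(α * d / 4)) := by
  have hG : ∀ v, ∑ u, nbrW G v u = 1 := fun v => sum_nbrW (by rw [hreg.degree_eq]; exact hd)
  set F : ℕ → V → (A → ℕ → V) → ℝ := fun t u x =>
    if α * d / 4 ≤ ((univ.filter (fun g => G.Adj u (x g t))).card : ℝ) then 0 else 1 with hF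
  have hF0 : ∀ t u x, 0 ≤ F t u x := by
    intro t u x
    simp only [hF]
    positivity
  have h1 : ∀ x : A → ℕ → V, (if ∀ t < T, GoodAt G α d x t then (0 : ℝ) else 1) ≤
      ∑ t ∈ range T, ∑ u, F t u x := by
    intro x
    have hnn : ∀ t, 0 ≤ ∑ u, F t u x := fun t => Finset.sum_nonneg fun u _ => hF0 t u x
    split_ifs with h
    · exact Finset.sum_nonneg fun t _ => hnn t
    · push Not at h
      obtain ⟨t, ht, hbad⟩ := h
      unfold GoodAt at hbad
      push Not at hbad
      obtain ⟨u, hu⟩ := hbad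
      have e : F t u x = 1 := by
        simp only [hF]
        rw [if_neg (not_le.mpr hu)]
      calc (1 : ℝ) = F t u x := e.symm
        _ ≤ ∑ u, F t u x := Finset.single_le_sum (f := fun u => F t u x)
            (fun u _ => hF0 t u x) (Finset.mem_univ u)
        _ ≤ _ := Finset.single_le_sum (f := fun t => ∑ u, F t u x)
            (fun t _ => hnn t) (Finset.mem_range.mpr ht)
  refine (walksE_mono G T h1).trans ?_
  rw [walksE_sum]
  have h2 : ∀ t ∈ range T, walksE G T (fun x => ∑ u, F t u x) ≤
      Fintype.card V * Real.exp (-(α * d / 4)) := by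
    intro t ht
    rw [walksE_sum]
    have h3 : ∀ u ∈ (univ : Finset V), walksE G T (F t u) ≤ Real.exp (-(α * d / 4)) := by
      intro u _
      rw [walksE_of_le hG (Finset.mem_range.mp ht).le (F t u)]
      · exact low_occupation hreg hd ha u t
      · intro k hk x y
        simp only [hF, upd_of_le x y hk]
    refine (Finset.sum_le_sum h3).trans ?_
    rw [Finset.sum_const, Finset.card_univ, nsmul_eq_mul]
  refine (Finset.sum_le_sum h2).trans ?_
  rw [Finset.sum_const, Finset.card_range, nsmul_eq_mul, mul_assoc]

lemma vx_mono [Fintype V] [Fintype A] {G : SimpleGraph V}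
    (hG : ∀ v, ∑ u, nbrW G v u = 1) (s : V) {t T : ℕ} (h : t ≤ T) :
    walksE (A := A) G t (fun x => if (vxInf s x t).1 = Set.univ then 1 else 0) ≤
      walksE (A := A) G T (fun x => if (vxInf s x T).1 = Set.univ then 1 else 0) := by
  rw [← walksE_of_le hG h]
  · refine walksE_mono G T fun x => ?_
    have hm : (vxInf s x t).1 ⊆ (vxInf s x T).1 := vxInf_mono s x h
    split_ifs with h1 h2
    · exact le_rfl
    · exact absurd (Set.univ_subset_iff.mp (h1 ▸ hm)) h2
    · exact zero_le_one
    · exact le_rfl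
  · intro k hk x y
    rw [vxInf_upd s x y hk]

end Rumor

namespace Rumor

variable {V : Type*} {A : Type*}

/-! ### Crude bounds for PUSH -/

lemma pushProbLe_nonneg [Fintype V] (G : SimpleGraph V) (s : V) (k : ℕ) :
    0 ≤ pushProbLe G s k := by
  unfold pushProbLe
  refine Finset.sum_nonneg fun σ _ => ?_
  split_ifs
  · exact Finset.prod_nonneg fun t _ => Finset.prod_nonneg fun v _ => nbrW_nonneg _ _ _
  · exact le_rfl

lemma sum_push_weights [Fintype V] {G : SimpleGraph V} (k : ℕ) :
    ∑ σ : Fin k → V → V, ∏ t, ∏ v, nbrW G v (σ t v) = (∏ v : V, ∑ u, nbrW G v u) ^ k := by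
  rw [← Fintype.prod_sum (κ := fun _ : Fin k => V → V) (fun _ ρ => ∏ v, nbrW G v (ρ v))]
  simp only [Finset.prod_const, Finset.card_univ, Fintype.card_fin]
  rw [← Fintype.prod_sum (κ := fun _ : V => V) (fun v u => nbrW G v u)]

lemma pushProbLe_le_one [Fintype V] (G : SimpleGraph V) (s : V) (k : ℕ) :
    pushProbLe G s k ≤ 1 := by
  have h1 : pushProbLe G s k ≤ ∑ σ : Fin k → V → V, ∏ t, ∏ v, nbrW G v (σ t v) := by
    unfold pushProbLe
    refine Finset.sum_le_sum fun σ _ => ?_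
    have h0 : 0 ≤ ∏ t, ∏ v, nbrW G v (σ t v) :=
      Finset.prod_nonneg fun t _ => Finset.prod_nonneg fun v _ => nbrW_nonneg _ _ _
    split_ifs <;> simp [h0]
  refine h1.trans ?_
  rw [sum_push_weights]
  have h0 : ∀ v, 0 ≤ ∑ u, nbrW G v u := fun v => Finset.sum_nonneg fun u _ => nbrW_nonneg _ _ _
  exact pow_le_one₀ (Finset.prod_nonneg fun v _ => h0 v)
    (Finset.prod_le_one (fun v _ => h0 v) fun v _ => sum_nbrW_le G v)

lemma ncard_pushInf_le [Fintype V] (s : V) (σ : ℕ → V → V) (t : ℕ) :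
    (pushInf s σ t).ncard ≤ 2 ^ t := by
  induction t with
  | zero => simp [pushInf]
  | succ t ih =>
    have h1 := Set.ncard_union_le (pushInf s σ t) (σ t '' pushInf s σ t)
    have h2 := Set.ncard_image_le (f := σ t) (Set.toFinite (pushInf s σ t))
    rw [pushInf, pow_succ]
    lia

lemma pushProbLe_eq_zero [Fintype V] (G : SimpleGraph V) (s : V) {k : ℕ}
    (h : 2 ^ k < Fintype.card V) : pushProbLe G s k = 0 := by
  unfold pushProbLe
  refine Finset.sum_eq_zero fun σ _ => if_neg fun hu => ?_
  have := ncard_pushInf_le s (extV σ) k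
  rw [hu, Set.ncard_univ, Nat.card_eq_fintype_card] at this
  lia

/-- Potential of a set of informed vertices, vanishing once all vertices are informed. -/
def pot [Fintype V] (S : Set V) : ℝ := if S = Set.univ then 0 else (1 / 2) ^ S.ncard

lemma pot_nonneg [Fintype V] (S : Set V) : 0 ≤ pot S := by
  unfold pot
  positivity

/-- One round of PUSH decreases the expected potential by a factor `1 - 1 / (2n)`, as some edge
joins an informed vertex to an uninformed one. -/
lemma pot_step [Fintype V] {G : SimpleGraph V} {d : ℕ} (hreg : G.IsRegularOfDegree d)
    (hd : 0 < d) (hconn : G.Connected) (S : Set V) (hS : S.Nonempty) :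
    ∑ ρ : V → V, (∏ v, nbrW G v (ρ v)) * pot (S ∪ ρ '' S) ≤
      (1 - 1 / (2 * Fintype.card V)) * pot S := by
  have hG : ∀ v, ∑ u, nbrW G v u = 1 := fun v => sum_nbrW (by rw [hreg.degree_eq]; exact hd)
  by_cases hu : S = Set.univ
  · simp [hu, pot]
  obtain ⟨u, w, huS, hwS, hadj⟩ : ∃ u w, u ∈ S ∧ w ∉ S ∧ G.Adj u w := by
    by_contra hcon
    push Not at hcon
    apply hu
    obtain ⟨v, hv⟩ := hS
    refine Set.eq_univ_of_forall fun w => ?_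
    obtain ⟨p⟩ := hconn.preconnected v w
    induction p with
    | nil => exact hv
    | cons h p ih =>
      refine ih ?_
      by_contra hn
      exact hcon _ _ hv hn h
  have hpot : pot S = (1 / 2) ^ S.ncard := if_neg hu
  have h1 : ∀ ρ : V → V, pot (S ∪ ρ '' S) ≤ pot S * (1 - 1 / 2 * if ρ u = w then 1 else 0) := by
    intro ρ
    rw [hpot]
    by_cases hall : S ∪ ρ '' S = Set.univ
    · rw [pot, if_pos hall]
      refine mul_nonneg (by positivity) ?_
      split_ifs <;> norm_num
    rw [pot, if_neg hall]
    split_ifs with hρ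
    · have hsub : insert w S ⊆ S ∪ ρ '' S :=
        Set.insert_subset (Or.inr ⟨u, huS, hρ⟩) Set.subset_union_left
      have hc := Set.ncard_le_ncard hsub (Set.toFinite _)
      rw [Set.ncard_insert_of_notMem hwS (Set.toFinite _)] at hc
      refine (pow_le_pow_of_le_one (by norm_num) (by norm_num) hc).trans ?_
      rw [pow_succ]
      norm_num
    · have hc := Set.ncard_le_ncard (Set.subset_union_left (s := S) (t := ρ '' S))
        (Set.toFinite _)
      refine (pow_le_pow_of_le_one (by norm_num) (by norm_num) hc).trans ?_
      norm_num
  have hw0 : ∀ ρ : V → V, 0 ≤ ∏ v, nbrW G v (ρ v) := fun ρ =>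
    Finset.prod_nonneg fun v _ => nbrW_nonneg _ _ _
  have h2 : ∑ ρ : V → V, (∏ v, nbrW G v (ρ v)) * (if ρ u = w then (1 : ℝ) else 0) =
      nbrW G u w := by
    have := sum_forced hG {u} (fun e : V => e) (by simp) (fun v => v) (fun _ => w)
    simpa using this
  have h3 : ∑ ρ : V → V, ∏ v, nbrW G v (ρ v) = 1 := sum_prod_nbrW hG (fun v => v)
  have h4 : 1 / (Fintype.card V : ℝ) ≤ nbrW G u w := by
    rw [nbrW, if_pos hadj, hreg.degree_eq]
    have hlt : d < Fintype.card V := by rw [← hreg.degree_eq u]; exact G.degree_lt_card_verts u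
    exact one_div_le_one_div_of_le (by exact_mod_cast hd) (by exact_mod_cast hlt.le)
  calc ∑ ρ : V → V, (∏ v, nbrW G v (ρ v)) * pot (S ∪ ρ '' S)
      ≤ ∑ ρ : V → V, (pot S * (∏ v, nbrW G v (ρ v)) -
          pot S / 2 * ((∏ v, nbrW G v (ρ v)) * (if ρ u = w then (1 : ℝ) else 0))) := by
        refine Finset.sum_le_sum fun ρ _ => ?_
        refine (mul_le_mul_of_nonneg_left (h1 ρ) (hw0 ρ)).trans (le_of_eq ?_)
        ring
    _ = pot S - pot S / 2 * nbrW G u w := by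
        rw [Finset.sum_sub_distrib, ← Finset.mul_sum, ← Finset.mul_sum, h2, h3, mul_one]
    _ ≤ (1 - 1 / (2 * Fintype.card V)) * pot S := by
        have := mul_le_mul_of_nonneg_left h4 (show 0 ≤ pot S / 2 by
          have := pot_nonneg S; positivity)
        have e : 1 / (2 * (Fintype.card V : ℝ)) * pot S = pot S / 2 * (1 / Fintype.card V) := by
          rw [one_div_mul_eq_div, div_mul_div_comm, mul_one]
        linarith

lemma pushInf_congr (s : V) {σ σ' : ℕ → V → V} {t : ℕ} (h : ∀ r < t, σ r = σ' r) :
    pushInf s σ t = pushInf s σ' t := by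
  induction t with
  | zero => rfl
  | succ t ih => simp only [pushInf, ih fun r hr => h r (by lia), h t (by lia)]

lemma pushInf_snoc (s : V) {k : ℕ} (σ : Fin k → V → V) (ρ : V → V) :
    pushInf s (extV (Fin.snoc (α := fun _ => V → V) σ ρ)) (k + 1) =
      pushInf s (extV σ) k ∪ ρ '' pushInf s (extV σ) k := by
  have h1 : pushInf s (extV (Fin.snoc (α := fun _ => V → V) σ ρ)) k =
      pushInf s (extV σ) k := by
    refine pushInf_congr s fun r hr => ?_
    have hr' : r < k + 1 := by lia
    rw [extV, extV, dif_pos hr, dif_pos hr']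
    exact Fin.snoc_castSucc (α := fun _ => V → V) (x := ρ) (p := σ) ⟨r, hr⟩
  have h2 : extV (Fin.snoc (α := fun _ => V → V) σ ρ) k = ρ := by
    rw [extV, dif_pos (Nat.lt_succ_self k)]
    exact Fin.snoc_last (α := fun _ => V → V) (x := ρ) (p := σ)
  rw [pushInf, h1, h2]

lemma sum_pot_le [Fintype V] {G : SimpleGraph V} {d : ℕ} (hreg : G.IsRegularOfDegree d)
    (hd : 0 < d) (hconn : G.Connected) (s : V) (k : ℕ) :
    ∑ σ : Fin k → V → V, (∏ t, ∏ v, nbrW G v (σ t v)) * pot (pushInf s (extV σ) k) ≤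
      (1 - 1 / (2 * Fintype.card V)) ^ k := by
  have hn : (1 : ℝ) ≤ Fintype.card V := by
    exact_mod_cast Fintype.card_pos_iff.mpr ⟨s⟩
  have hq : 0 ≤ 1 - 1 / (2 * (Fintype.card V : ℝ)) := by
    rw [sub_nonneg, div_le_one (by positivity)]
    linarith
  induction k with
  | zero =>
    simp only [Finset.univ_unique, Finset.univ_eq_empty, Finset.prod_empty, one_mul,
      Finset.sum_singleton, pow_zero]
    unfold pot
    split_ifs
    · exact zero_le_one
    · exact pow_le_one₀ (by norm_num) (by norm_num)
  | succ k ih =>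
    rw [← (Fin.snocEquiv (fun _ : Fin (k + 1) => V → V)).sum_comp, Fintype.sum_prod_type,
      Finset.sum_comm]
    calc _ = ∑ σ : Fin k → V → V, (∏ t, ∏ v, nbrW G v (σ t v)) *
          ∑ ρ : V → V, (∏ v, nbrW G v (ρ v)) *
            pot (pushInf s (extV σ) k ∪ ρ '' pushInf s (extV σ) k) := by
          refine Finset.sum_congr rfl fun σ _ => ?_
          rw [Finset.mul_sum]
          refine Finset.sum_congr rfl fun ρ _ => ?_
          simp only [Fin.snocEquiv, Equiv.coe_fn_mk]
          rw [pushInf_snoc, Fin.prod_univ_castSucc]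
          simp only [Fin.snoc_castSucc, Fin.snoc_last]
          ring
      _ ≤ ∑ σ : Fin k → V → V, (1 - 1 / (2 * (Fintype.card V : ℝ))) *
          ((∏ t, ∏ v, nbrW G v (σ t v)) * pot (pushInf s (extV σ) k)) := by
          refine Finset.sum_le_sum fun σ _ => ?_
          have h0 : 0 ≤ ∏ t, ∏ v, nbrW G v (σ t v) :=
            Finset.prod_nonneg fun t _ => Finset.prod_nonneg fun v _ => nbrW_nonneg _ _ _
          have hs : (pushInf s (extV σ) k).Nonempty :=
            ⟨s, pushInf_mono s _ (Nat.zero_le k) rfl⟩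
          refine (mul_le_mul_of_nonneg_left (pot_step hreg hd hconn _ hs) h0).trans
            (le_of_eq ?_)
          ring
      _ ≤ _ := by
          rw [← Finset.mul_sum, pow_succ, mul_comm]
          exact mul_le_mul_of_nonneg_right ih hq

/-- PUSH finishes within `O(n²)` rounds, with an exponential tail. -/
lemma push_tail [Fintype V] {G : SimpleGraph V} {d : ℕ} (hreg : G.IsRegularOfDegree d)
    (hd : 0 < d) (hconn : G.Connected) (s : V) (k : ℕ) :
    1 - Real.exp (Fintype.card V - k / (2 * Fintype.card V)) ≤ pushProbLe G s k := by
  have hG : ∀ v, ∑ u, nbrW G v u = 1 := fun v => sum_nbrW (by rw [hreg.degree_eq]; exact hd)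
  have hn : (1 : ℝ) ≤ Fintype.card V := by
    exact_mod_cast Fintype.card_pos_iff.mpr ⟨s⟩
  have h1 : 1 - pushProbLe G s k ≤ 2 ^ Fintype.card V *
      ∑ σ : Fin k → V → V, (∏ t, ∏ v, nbrW G v (σ t v)) * pot (pushInf s (extV σ) k) := by
    have e : (1 : ℝ) = ∑ σ : Fin k → V → V, ∏ t, ∏ v, nbrW G v (σ t v) := by
      rw [sum_push_weights]
      simp [hG]
    rw [sub_le_iff_le_add, pushProbLe, Finset.mul_sum, ← Finset.sum_add_distrib]
    refine e.le.trans (Finset.sum_le_sum fun σ _ => ?_)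
    have h0 : 0 ≤ ∏ t, ∏ v, nbrW G v (σ t v) :=
      Finset.prod_nonneg fun t _ => Finset.prod_nonneg fun v _ => nbrW_nonneg _ _ _
    split_ifs with h
    · have := mul_nonneg h0 (pot_nonneg (pushInf s (extV σ) k))
      have : 0 ≤ (2 : ℝ) ^ Fintype.card V *
        ((∏ t, ∏ v, nbrW G v (σ t v)) * pot (pushInf s (extV σ) k)) := by positivity
      linarith
    · have hc : (pushInf s (extV σ) k).ncard ≤ Fintype.card V := by
        rw [← Nat.card_eq_fintype_card]
        exact Set.ncard_le_card _
      have : (1 : ℝ) ≤ 2 ^ Fintype.card V * pot (pushInf s (extV σ) k) := by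
        rw [pot, if_neg h]
        calc (1 : ℝ) = 2 ^ Fintype.card V * (1 / 2) ^ Fintype.card V := by
              rw [← mul_pow]
              norm_num
          _ ≤ _ := mul_le_mul_of_nonneg_left
              (pow_le_pow_of_le_one (by norm_num) (by norm_num) hc) (by positivity)
      nlinarith
  have h2 : (2 : ℝ) ^ Fintype.card V ≤ Real.exp (Fintype.card V) := by
    have := pow_le_pow_left₀ (by norm_num) (show (2 : ℝ) ≤ Real.exp 1 by
      linarith [Real.add_one_le_exp (1 : ℝ)]) (Fintype.card V)
    rwa [← Real.exp_nat_mul, mul_one] at this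
  have hq : 0 ≤ 1 - 1 / (2 * (Fintype.card V : ℝ)) := by
    rw [sub_nonneg, div_le_one (by positivity)]
    linarith
  have h3 : (1 - 1 / (2 * (Fintype.card V : ℝ))) ^ k ≤
      Real.exp (-(k / (2 * Fintype.card V))) := by
    have := pow_le_pow_left₀ hq (Real.one_sub_le_exp_neg (1 / (2 * (Fintype.card V : ℝ)))) k
    rw [← Real.exp_nat_mul] at this
    refine this.trans (le_of_eq ?_)
    congr 1
    ring
  have h4 := mul_le_mul h2 ((sum_pot_le hreg hd hconn s k).trans h3)
    (Finset.sum_nonneg fun σ _ => mul_nonneg (Finset.prod_nonneg fun t _ =>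
      Finset.prod_nonneg fun v _ => nbrW_nonneg _ _ _) (pot_nonneg _)) (Real.exp_pos _).le
  rw [← Real.exp_add, ← sub_eq_add_neg] at h4
  linarith

end Rumor

namespace Rumor

variable {V : Type*}

/-! ### Choice of the constants -/

lemma vxProbLe_eq [Fintype V] (G : SimpleGraph V) (s : V) (a k : ℕ) :
    vxProbLe G s a k = walksE (A := Fin a) G k
      (fun x => if (vxInf s x k).1 = Set.univ then 1 else 0) :=
  walksProb_eq G k _

lemma vxProbLe_nonneg [Fintype V] (G : SimpleGraph V) (s : V) (a k : ℕ) :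
    0 ≤ vxProbLe G s a k := by
  unfold vxProbLe walksProb
  refine Finset.sum_nonneg fun x0 _ => Finset.sum_nonneg fun σ _ => ?_
  split_ifs
  · exact mul_nonneg (Finset.prod_nonneg fun g _ => statW_nonneg _ _)
      (Finset.prod_nonneg fun t _ => Finset.prod_nonneg fun g _ =>
        Finset.prod_nonneg fun v _ => nbrW_nonneg _ _ _)
  · exact le_rfl

/-- The comparison for the number of rounds `k` between `log n` and a polynomial bound in `n`. -/
lemma push_le_vx_poly [Fintype V] [Nonempty V] {G : SimpleGraph V} {d : ℕ}
    (hreg : G.IsRegularOfDegree d) (hd : 0 < d) {lam α β b : ℝ} (hlam : 0 < lam) (hα : 0 < α)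
    (hβ : 0 < β) (hb : 0 ≤ b)
    (hM : 4 * (4 + 2 * (16 * (lam + 5) * (b + 1)) + lam + 2) ≤ α * β)
    (hn2 : 2 ≤ Fintype.card V) (hdlog : β * Real.log (Fintype.card V) ≤ d) (s : V) (a : ℕ)
    (ha : α * Fintype.card V ≤ a) (k : ℕ) (hk : Fintype.card V ≤ 2 ^ k)
    (hkK : (k : ℝ) ≤ 2 * (b + 1) * (Fintype.card V : ℝ) ^ 2) :
    pushProbLe G s k ≤ vxProbLe G s a ⌊(3 + 8 / α * (lam + 4)) * k⌋₊ +
      2 * Real.exp (-(lam + 2) * Real.log (Fintype.card V)) := by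
  set n := Fintype.card V with hn
  set c := 3 + 8 / α * (lam + 4) with hc
  set T := ⌊c * k⌋₊ with hT
  have hnR : (2 : ℝ) ≤ n := by exact_mod_cast hn2
  set L := Real.log n with hL
  have hLexp : Real.exp L = n := Real.exp_log (by linarith)
  have hL2 : 1 / 2 ≤ L := by
    have h1 : Real.log 2 ≤ L := Real.log_le_log (by norm_num) hnR
    have h2 := Real.log_two_gt_d9
    linarith
  have hk1 : 1 ≤ k := by
    by_contra hcon
    obtain rfl : k = 0 := by lia
    simp at hk
    lia
  have hkR : (1 : ℝ) ≤ k := by exact_mod_cast hk1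
  have hNe : NeZero k := ⟨by lia⟩
  have h2e : (2 : ℝ) ≤ Real.exp 1 := by linarith [Real.add_one_le_exp (1 : ℝ)]
  have h2k : (2 : ℝ) ^ k ≤ Real.exp k := by
    have := pow_le_pow_left₀ (by norm_num) h2e k
    rwa [← Real.exp_nat_mul, mul_one] at this
  have hLk : L ≤ k := by
    rw [← Real.exp_le_exp, hLexp]
    refine le_trans ?_ h2k
    exact_mod_cast hk
  have hc0 : 0 < c := by positivity
  have hTle : (T : ℝ) ≤ c * k := Nat.floor_le (by positivity)
  have hTge : (c - 1) * k ≤ T := by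
    have := Nat.lt_floor_add_one (c * (k : ℝ))
    rw [← hT] at this
    linarith
  have hαc : α / 8 * (c - 3) = lam + 4 := by
    rw [hc]
    field_simp
    ring
  -- the error term of the union bound over chains
  have hchain : (2 : ℝ) ^ k * (2 * Real.exp (α / 8) ^ 2) ^ k / Real.exp (α / 8) ^ T ≤
      Real.exp (-(lam + 2) * L) := by
    have e1 : (2 : ℝ) ^ k * (2 * Real.exp (α / 8) ^ 2) ^ k ≤
        Real.exp k * (Real.exp k * Real.exp (2 * k * (α / 8))) := by
      rw [mul_pow, ← pow_mul, ← Real.exp_nat_mul (α / 8)]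
      push_cast
      gcongr
    rw [div_le_iff₀ (by positivity)]
    refine e1.trans ?_
    rw [← Real.exp_nat_mul, ← Real.exp_add, ← Real.exp_add, ← Real.exp_add, Real.exp_le_exp]
    have e2 : (c - 1) * k * (α / 8) ≤ T * (α / 8) :=
      mul_le_mul_of_nonneg_right hTge (by positivity)
    have e3 : (c - 1) * k * (α / 8) = k * (lam + 4) + 2 * k * (α / 8) := by
      rw [← hαc]
      ring
    have e4 : (lam + 2) * L ≤ (lam + 2) * k := mul_le_mul_of_nonneg_left hLk (by linarith)
    linarith
  -- the probability of a badly occupied neighborhood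
  set p := 16 * (lam + 5) * (b + 1) with hp
  have hp0 : 0 ≤ p := by positivity
  have hdn : (d : ℝ) ≤ n := by
    obtain ⟨v⟩ := ‹Nonempty V›
    have : d < n := by rw [← hreg.degree_eq v]; exact G.degree_lt_card_verts v
    exact_mod_cast this.le
  have hαn : 1 ≤ α * n := by
    have e1 : α * β * L ≤ α * n := by
      rw [mul_assoc]
      exact mul_le_mul_of_nonneg_left (hdlog.trans hdn) hα.le
    have e2 : 2 ≤ α * β := by linarith
    nlinarith
  have hcn : c ≤ 8 * (lam + 5) * n := by
    have e1 : 8 / α ≤ 8 * n := by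
      rw [div_le_iff₀ hα]
      linarith
    have e2 := mul_le_mul_of_nonneg_right e1 (show 0 ≤ lam + 4 by linarith)
    rw [hc]
    nlinarith
  have hTn : (T : ℝ) * n ≤ p * (n : ℝ) ^ 4 := by
    have e1 : c * k ≤ 8 * (lam + 5) * n * (2 * (b + 1) * (n : ℝ) ^ 2) :=
      mul_le_mul hcn hkK (by positivity) (by positivity)
    have e2 := mul_le_mul_of_nonneg_right (hTle.trans e1) (show (0 : ℝ) ≤ n by linarith)
    refine e2.trans (le_of_eq ?_)
    rw [hp]
    ring
  have hbad : (T : ℝ) * n * Real.exp (-(α * d / 4)) ≤ Real.exp (-(lam + 2) * L) := by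
    have e1 : p ≤ Real.exp (2 * p * L) := by
      have := Real.add_one_le_exp (2 * p * L)
      nlinarith
    have e2 : (n : ℝ) ^ 4 = Real.exp (4 * L) := by
      rw [← hLexp, ← Real.exp_nat_mul]
      norm_num
    have e3 : (4 + 2 * p + lam + 2) * L ≤ α * d / 4 := by
      have e4 : α * β * L ≤ α * d := by
        rw [mul_assoc]
        exact mul_le_mul_of_nonneg_left hdlog hα.le
      have e5 := mul_le_mul_of_nonneg_right hM (show 0 ≤ L by linarith)
      linarith
    calc (T : ℝ) * n * Real.exp (-(α * d / 4))
        ≤ (Real.exp (2 * p * L) * Real.exp (4 * L)) *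
          Real.exp (-((4 + 2 * p + lam + 2) * L)) := by
          refine mul_le_mul (hTn.trans ?_) ?_ (Real.exp_pos _).le (by positivity)
          · rw [e2]
            exact mul_le_mul_of_nonneg_right e1 (Real.exp_pos _).le
          · rw [Real.exp_le_exp]
            linarith
      _ = Real.exp (-(lam + 2) * L) := by
          rw [← Real.exp_add, ← Real.exp_add]
          congr 1
          ring
  have h1 := push_le_vx (A := Fin a) hreg hd hα s k T
  have h2 := bad_prob_le (A := Fin a) hreg hd (α := α) (by simpa using ha) T
  rw [vxProbLe_eq]
  linarith

end Rumor

/-- For any constants `α, β, λ > 0` with `α·β` sufficiently large,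
there is a constant `c > 0` such that for every connected `d`-regular graph `G` on `n`
vertices with `d ≥ β log n`, every source `s`, every number of agents `|A| ≥ α n` and
every `k ≥ 0`, `P[T_visitx(G,s) ≤ c k] ≥ P[T_push(G,s) ≤ k] − n^{−λ}`. -/
theorem visitx_le_push_regular (lam : ℝ) (hlam : 0 < lam) :
    ∃ M : ℝ, ∀ α β : ℝ, 0 < α → 0 < β → M ≤ α * β →
      ∃ c : ℝ, 0 < c ∧
        ∀ (V : Type) [Fintype V] (G : SimpleGraph V) (n d : ℕ),
          n = Fintype.card V → G.Connected → G.IsRegularOfDegree d →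
          β * Real.log n ≤ (d : ℝ) →
          ∀ (s : V) (a : ℕ), α * n ≤ (a : ℝ) →
          ∀ k : ℕ,
            Rumor.pushProbLe G s k - (n : ℝ) ^ (-lam) ≤ Rumor.vxProbLe G s a ⌊c * k⌋₊ := by
  set b : ℕ := ⌈lam⌉₊ + 2 with hb
  have hblam : lam + 2 ≤ b := by
    have := Nat.le_ceil lam
    rw [hb]
    push_cast
    linarith
  refine ⟨4 * (4 + 2 * (16 * (lam + 5) * ((b : ℝ) + 1)) + lam + 2), fun α β hα hβ hM =>
    ⟨3 + 8 / α * (lam + 4), by positivity, ?_⟩⟩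
  intro V _ G n d hn hconn hreg hdlog s a ha k
  have hne : Nonempty V := ⟨s⟩
  subst hn
  have hpos : 0 < Fintype.card V := Fintype.card_pos
  have hvx0 := Rumor.vxProbLe_nonneg G s a ⌊(3 + 8 / α * (lam + 4)) * (k : ℝ)⌋₊
  have hpush1 := Rumor.pushProbLe_le_one G s k
  -- on a single vertex the error term is `1`
  rcases Nat.lt_or_ge (Fintype.card V) 2 with h1 | h2
  · have e : Fintype.card V = 1 := by lia
    rw [e, Nat.cast_one, Real.one_rpow]
    linarith
  have hd : 0 < d := by
    have : Nontrivial V := Fintype.one_lt_card_iff_nontrivial.mp h2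
    rw [← hreg.degree_eq s]
    exact hconn.preconnected.degree_pos_of_nontrivial s
  have hnR : (2 : ℝ) ≤ Fintype.card V := by exact_mod_cast h2
  have hr0 : 0 < (Fintype.card V : ℝ) ^ (-lam) := Real.rpow_pos_of_pos (by linarith) _
  -- fewer than `log₂ n` rounds of PUSH never suffice
  rcases Nat.lt_or_ge (2 ^ k) (Fintype.card V) with hk | hk
  · rw [Rumor.pushProbLe_eq_zero G s hk]
    linarith
  have hq : 4 * Real.exp (-(lam + 2) * Real.log (Fintype.card V)) ≤
      (Fintype.card V : ℝ) ^ (-lam) := by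
    have e1 : Real.exp (-(lam + 2) * Real.log (Fintype.card V)) * (Fintype.card V : ℝ) ^ 2 =
        (Fintype.card V : ℝ) ^ (-lam) := by
      rw [Real.rpow_def_of_pos (by linarith)]
      conv_lhs =>
        rw [← Real.exp_log (show (0 : ℝ) < Fintype.card V by linarith), Real.log_exp,
          ← Real.exp_nat_mul, ← Real.exp_add]
      congr 1
      push_cast
      ring
    have e2 : (4 : ℝ) ≤ (Fintype.card V : ℝ) ^ 2 := by nlinarith
    have := mul_le_mul_of_nonneg_left e2
      (Real.exp_pos (-(lam + 2) * Real.log (Fintype.card V))).le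
    linarith
  have hq0 := Real.exp_pos (-(lam + 2) * Real.log (Fintype.card V))
  set K : ℕ := 2 * (b + 1) * Fintype.card V ^ 2 with hK
  rcases Nat.le_total k K with hkK | hkK
  · have := Rumor.push_le_vx_poly hreg hd hlam hα hβ (Nat.cast_nonneg b) hM h2 hdlog s a ha k hk
      (by exact_mod_cast hkK)
    linarith
  -- for larger `k`, already `K` rounds of PUSH suffice with high probability
  · have hKbig : Fintype.card V ≤ 2 ^ K := by
      have e1 : Fintype.card V ≤ K := by
        rw [hK]
        nlinarith
      exact e1.trans Nat.lt_two_pow_self.le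
    have h3 := Rumor.push_le_vx_poly hreg hd hlam hα hβ (Nat.cast_nonneg b) hM h2 hdlog s a ha K
      hKbig (by rw [hK]; push_cast; exact le_rfl)
    have h4 := Rumor.push_tail hreg hd hconn s K
    have h5 : Real.exp (Fintype.card V - K / (2 * Fintype.card V)) ≤
        Real.exp (-(lam + 2) * Real.log (Fintype.card V)) := by
      rw [Real.exp_le_exp]
      have e1 : (K : ℝ) / (2 * Fintype.card V) = (b + 1) * Fintype.card V := by
        rw [hK]
        push_cast
        field_simp
      have e2 : Real.log (Fintype.card V) ≤ Fintype.card V :=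
        Real.log_le_self (by linarith)
      have e3 := mul_le_mul hblam e2 (Real.log_nonneg (by linarith)) (Nat.cast_nonneg b)
      rw [e1]
      linarith
    have hfl : ⌊(3 + 8 / α * (lam + 4)) * (K : ℝ)⌋₊ ≤ ⌊(3 + 8 / α * (lam + 4)) * (k : ℝ)⌋₊ := by
      refine Nat.floor_le_floor (mul_le_mul_of_nonneg_left ?_ (by positivity))
      exact_mod_cast hkK
    have h6 := Rumor.vx_mono (A := Fin a) (G := G)
      (fun v => Rumor.sum_nbrW (by rw [hreg.degree_eq]; exact hd)) s hfl
    rw [← Rumor.vxProbLe_eq, ← Rumor.vxProbLe_eq] at h6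
    linarith
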